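/- arXiv:math/9311208 — 7 statements merged into one kernel-verified Lean document; each statement's English description precedes it below -/
import Mathlib

section
/- Let q > 1 and let w be a positive non-increasing function on (0,1) with ∫_0^1 w(t) dt = 1. Then the Lorentz function space L_{w,q}(0,1) is isometric to a subspace of L_q if and only if w(t) = 1 for almost every t ∈ (0,1) (so that L_{w,q}(0,1) = L_q(0,1)). -/
/-!
Write `W t = ∫₀ᵗ w`. For disjoint `A, B ⊆ (0,1)` of measures `a, b`, the `q`-th power of the norm of
`x 1_A + 1_B` is `(x^q - 1) W(a) + W(a + b)` for `x ≥ 1` and `(1 - x^q) W(b) + x^q W(a + b)` for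
`0 ≤ x ≤ 1`. If the space embeds isometrically into `L_q(μ)`, this is also `∫ |x F + G|^q dμ`, which
is differentiable in `x` because `q > 1`. Comparing the two one-sided derivatives at `x = 1` gives
`W(a + b) = W(a) + W(b)`. Hence difference quotients of `W` do not depend on the base point, and
Lebesgue differentiation makes `w = W'` constant almost everywhere. Conversely, for `w = 1` the norm
is that of `L_q`, as `|f|` and `f^*` are equidistributed.
-/

open MeasureTheory Set

/-- The non-increasing rearrangement (on `(0,1)`) of a function `f : ℝ → ℝ`:
`f^*(t) = inf { s ≥ 0 : λ({u ∈ (0,1) : |f(u)| > s}) ≤ t }`. -/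
noncomputable def decRearr (f : ℝ → ℝ) (t : ℝ) : ℝ :=
  sInf {s : ℝ | 0 ≤ s ∧ volume {u ∈ Ioo (0:ℝ) 1 | s < |f u|} ≤ ENNReal.ofReal t}

open Filter ProbabilityTheory Topology

lemma decRearr_nonneg (f : ℝ → ℝ) (t : ℝ) : 0 ≤ decRearr f t :=
  Real.sInf_nonneg fun _ hs ↦ hs.1

section Equimeasurability

/-- The distribution of `|f|`, for `f` viewed as a random variable on the probability space
`(0,1)`. -/
noncomputable def absLaw (f : ℝ → ℝ) : Measure ℝ :=
  (volume.restrict (Ioo 0 1)).map fun u ↦ |f u|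

variable {f : ℝ → ℝ} {s t : ℝ}

instance isProbabilityMeasure_restrict_Ioo :
    IsProbabilityMeasure (volume.restrict (Ioo (0 : ℝ) 1)) :=
  ⟨by simp⟩

lemma isProbabilityMeasure_absLaw (hf : Measurable f) : IsProbabilityMeasure (absLaw f) :=
  Measure.isProbabilityMeasure_map hf.abs.aemeasurable

lemma absLaw_Ioi (hf : Measurable f) (s : ℝ) :
    absLaw f (Ioi s) = volume {u ∈ Ioo (0 : ℝ) 1 | s < |f u|} := by
  rw [absLaw, Measure.map_apply hf.abs measurableSet_Ioi,
    Measure.restrict_apply' measurableSet_Ioo, inter_comm]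
  rfl

lemma volume_superlevel_eq (hf : Measurable f) (s : ℝ) :
    volume {u ∈ Ioo (0 : ℝ) 1 | s < |f u|} = ENNReal.ofReal (1 - cdf (absLaw f) s) := by
  have := isProbabilityMeasure_absLaw hf
  rw [← absLaw_Ioi hf, ← compl_Iic, prob_compl_eq_one_sub measurableSet_Iic, ← ofReal_cdf,
    ENNReal.ofReal_sub _ (cdf_nonneg _ _), ENNReal.ofReal_one]

lemma decRearr_le_iff (hf : Measurable f) (ht : 0 < t) (hs : 0 ≤ s) :
    decRearr f t ≤ s ↔ 1 - t ≤ cdf (absLaw f) s := by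
  have hset : {s : ℝ | 0 ≤ s ∧ volume {u ∈ Ioo (0 : ℝ) 1 | s < |f u|} ≤ ENNReal.ofReal t} =
      {s | 0 ≤ s ∧ 1 - t ≤ cdf (absLaw f) s} := by
    ext s
    rw [mem_ofPred_eq, volume_superlevel_eq hf, ENNReal.ofReal_le_ofReal_iff ht.le, sub_le_comm]
    rfl
  rw [decRearr, hset]
  refine ⟨fun h ↦ ?_, fun h ↦ csInf_le ⟨0, fun _ hr ↦ hr.1⟩ ⟨hs, h⟩⟩
  have hne : {s | 0 ≤ s ∧ 1 - t ≤ cdf (absLaw f) s}.Nonempty :=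
    ((eventually_ge_atTop 0).and
      ((tendsto_cdf_atTop _).eventually_const_le (sub_lt_self 1 ht))).exists
  have hgt : ∀ s' > s, 1 - t ≤ cdf (absLaw f) s' := fun s' hs' ↦ by
    obtain ⟨r, hr, hrs⟩ := exists_lt_of_csInf_lt hne (h.trans_lt hs')
    exact hr.2.trans (monotone_cdf _ hrs.le)
  exact ge_of_tendsto (((cdf (absLaw f)).right_continuous s).mono Ioi_subset_Ici_self)
    (eventually_nhdsWithin_of_forall hgt)

lemma antitoneOn_decRearr (hf : Measurable f) : AntitoneOn (decRearr f) (Ioi 0) := by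
  intro s hs t ht hst
  have h := (decRearr_le_iff hf hs (decRearr_nonneg f s)).1 le_rfl
  exact (decRearr_le_iff hf ht (decRearr_nonneg f s)).2 (by linarith)

lemma aemeasurable_decRearr (hf : Measurable f) :
    AEMeasurable (decRearr f) (volume.restrict (Ioo 0 1)) :=
  aemeasurable_restrict_of_antitoneOn measurableSet_Ioo
    ((antitoneOn_decRearr hf).mono Ioo_subset_Ioi_self)

lemma volume_superlevel_decRearr (hf : Measurable f) (s : ℝ) :
    volume (decRearr f ⁻¹' Ioi s ∩ Ioo 0 1) = volume {u ∈ Ioo (0 : ℝ) 1 | s < |f u|} := by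
  rcases lt_or_ge s 0 with hs | hs
  · congr 1
    ext u
    simp [hs.trans_le (abs_nonneg (f u)), hs.trans_le (decRearr_nonneg f u)]
  · have hset : decRearr f ⁻¹' Ioi s ∩ Ioo 0 1 = Ioo 0 (1 - cdf (absLaw f) s) := by
      ext t
      have hlt : 0 < t → (s < decRearr f t ↔ t < 1 - cdf (absLaw f) s) := fun ht ↦ by
        rw [← not_le, decRearr_le_iff hf ht hs, not_le, lt_sub_comm]
      have := cdf_nonneg (absLaw f) s
      grind
    rw [hset, volume_superlevel_eq hf, Real.volume_Ioo, sub_zero]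

lemma map_decRearr (hf : Measurable f) :
    (volume.restrict (Ioo 0 1)).map (decRearr f) = absLaw f := by
  have := isProbabilityMeasure_absLaw hf
  have := Measure.isProbabilityMeasure_map (aemeasurable_decRearr hf)
  refine Measure.ext_of_Iic _ _ fun s ↦ ?_
  rw [← compl_Ioi, prob_compl_eq_one_sub measurableSet_Ioi, prob_compl_eq_one_sub measurableSet_Ioi,
    absLaw_Ioi hf, Measure.map_apply_of_aemeasurable (aemeasurable_decRearr hf) measurableSet_Ioi,
    Measure.restrict_apply' measurableSet_Ioo, volume_superlevel_decRearr hf]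

lemma integral_decRearr_rpow (hf : Measurable f) (q : ℝ) :
    ∫ t in Ioo 0 1, decRearr f t ^ q = ∫ u in Ioo 0 1, |f u| ^ q := by
  have hm (μ : Measure ℝ) : AEStronglyMeasurable (fun x : ℝ ↦ x ^ q) μ :=
    (measurable_id.pow_const q).aestronglyMeasurable
  rw [← integral_map (aemeasurable_decRearr hf) (hm _), map_decRearr hf, absLaw,
    integral_map hf.abs.aemeasurable (hm _)]

end Equimeasurability

section TwoStep

lemma decRearr_eq_of_volume_le_of_lt_volume {f : ℝ → ℝ} {t y : ℝ} (hy : 0 ≤ y)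
    (hlt : volume {u ∈ Ioo (0 : ℝ) 1 | y < |f u|} ≤ ENNReal.ofReal t)
    (hle : ENNReal.ofReal t < volume {u ∈ Ioo (0 : ℝ) 1 | y ≤ |f u|}) :
    decRearr f t = y := by
  rw [decRearr]
  refine le_antisymm (csInf_le ⟨0, fun _ hs ↦ hs.1⟩ ⟨hy, hlt⟩) (le_csInf ⟨y, hy, hlt⟩ ?_)
  rintro s ⟨-, hs⟩
  by_contra! hsy
  have hsub : {u ∈ Ioo (0 : ℝ) 1 | y ≤ |f u|} ⊆ {u ∈ Ioo 0 1 | s < |f u|} :=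
    fun u hu ↦ ⟨hu.1, hsy.trans_le hu.2⟩
  exact (hle.trans_le ((measure_mono hsub).trans hs)).false

/-- For disjoint `A` and `B`, the step function with value `y` on `A`, value `z` on `B`, and `0`
elsewhere. It is encoded as a linear combination of indicators, so that a linear map can be applied
to it. -/
noncomputable def twoStep (A B : Set ℝ) (y z : ℝ) : ℝ → ℝ :=
  y • A.indicator 1 + z • B.indicator 1

variable {A B : Set ℝ} {a b y z q : ℝ}

lemma twoStep_comm (A B : Set ℝ) (y z : ℝ) : twoStep A B y z = twoStep B A z y :=
  add_comm _ _

lemma measurable_twoStep (hA : MeasurableSet A) (hB : MeasurableSet B) (y z : ℝ) :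
    Measurable (twoStep A B y z) :=
  ((measurable_one.indicator hA).const_smul y).add ((measurable_one.indicator hB).const_smul z)

lemma abs_twoStep (hAB : Disjoint A B) (hy : 0 ≤ y) (hz : 0 ≤ z) (u : ℝ) [Decidable (u ∈ A)]
    [Decidable (u ∈ B)] :
    |twoStep A B y z u| = if u ∈ A then y else if u ∈ B then z else 0 := by
  have := disjoint_left.1 hAB
  by_cases hA : u ∈ A <;> by_cases hB : u ∈ B <;> simp_all [twoStep]

lemma decRearr_twoStep (hA : A ⊆ Ioo 0 1) (hB : B ⊆ Ioo 0 1) (hBm : MeasurableSet B)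
    (hAB : Disjoint A B) (ha : 0 ≤ a) (hb : 0 ≤ b) (hAv : volume A = ENNReal.ofReal a)
    (hBv : volume B = ENNReal.ofReal b) (hz : 0 ≤ z) (hzy : z ≤ y) {t : ℝ} (ht : t ∈ Ioo 0 1) :
    decRearr (twoStep A B y z) t = if t < a then y else if t < a + b then z else 0 := by
  classical
  have hy : 0 ≤ y := hz.trans hzy
  have habs := abs_twoStep hAB hy hz
  have hABv : volume (A ∪ B) = ENNReal.ofReal (a + b) := by
    rw [measure_union hAB hBm, hAv, hBv, ENNReal.ofReal_add ha hb]
  have hlt {c d : ℝ} (hcd : c < d) (hd : 0 < d) : ENNReal.ofReal c < ENNReal.ofReal d :=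
    (ENNReal.ofReal_lt_ofReal_iff hd).2 hcd
  split_ifs with h₁ h₂
  · refine decRearr_eq_of_volume_le_of_lt_volume hy ?_
      ((hlt h₁ (ht.1.trans h₁)).trans_le (hAv ▸ measure_mono fun u hu ↦ ?_))
    · refine (measure_mono (t := ∅) fun u hu ↦ ?_).trans (by simp)
      grind
    · grind
  · refine decRearr_eq_of_volume_le_of_lt_volume hz ?_
      ((hlt h₂ (ht.1.trans h₂)).trans_le (hABv ▸ measure_mono fun u hu ↦ ?_))
    · refine (measure_mono (t := A) fun u hu ↦ ?_).trans
        (hAv.trans_le (ENNReal.ofReal_le_ofReal (not_lt.1 h₁)))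
      grind
    · grind
  · refine decRearr_eq_of_volume_le_of_lt_volume le_rfl ?_ ?_
    · refine (measure_mono (t := A ∪ B) fun u hu ↦ ?_).trans
        (hABv.trans_le (ENNReal.ofReal_le_ofReal (not_lt.1 h₂)))
      grind
    · rw [sep_eq_self_iff_mem_true.2 fun _ _ ↦ abs_nonneg _, Real.volume_Ioo, sub_zero]
      exact hlt ht.2 one_pos

lemma integral_decRearr_twoStep {w : ℝ → ℝ} (hw : IntegrableOn w (Ioo 0 1)) (hA : A ⊆ Ioo 0 1)
    (hB : B ⊆ Ioo 0 1) (hBm : MeasurableSet B) (hAB : Disjoint A B) (ha : 0 ≤ a) (hb : 0 ≤ b)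
    (hab : a + b ≤ 1) (hAv : volume A = ENNReal.ofReal a) (hBv : volume B = ENNReal.ofReal b)
    (hz : 0 ≤ z) (hzy : z ≤ y) (hq : q ≠ 0) :
    IntegrableOn (fun t ↦ decRearr (twoStep A B y z) t ^ q * w t) (Ioo 0 1) ∧
      ∫ t in Ioo 0 1, decRearr (twoStep A B y z) t ^ q * w t =
        (y ^ q - z ^ q) * (∫ t in 0..a, w t) + z ^ q * ∫ t in 0..(a + b), w t := by
  have heq : EqOn (fun t ↦ decRearr (twoStep A B y z) t ^ q * w t)
      (fun t ↦ (y ^ q - z ^ q) * (Iio a).indicator w t + z ^ q * (Iio (a + b)).indicator w t)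
      (Ioo 0 1) := fun t ht ↦ by
    simp only [decRearr_twoStep hA hB hBm hAB ha hb hAv hBv hz hzy ht, indicator_apply, mem_Iio]
    split_ifs <;> first | linarith | simp [Real.zero_rpow hq]
  have hint (c k : ℝ) : IntegrableOn (fun t ↦ k * (Iio c).indicator w t) (Ioo 0 1) :=
    (hw.indicator measurableSet_Iio).const_mul k
  have hval {c : ℝ} (hc₀ : 0 ≤ c) (hc₁ : c ≤ 1) :
      ∫ t in Ioo 0 1, (Iio c).indicator w t = ∫ t in 0..c, w t := by
    rw [setIntegral_indicator measurableSet_Iio, Ioo_inter_Iio, min_eq_right hc₁,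
      intervalIntegral.integral_of_le hc₀, integral_Ioc_eq_integral_Ioo]
  refine ⟨IntegrableOn.congr_fun ((hint a _).add (hint (a + b) _)) heq.symm measurableSet_Ioo, ?_⟩
  rw [setIntegral_congr_fun measurableSet_Ioo heq, integral_add (hint a _) (hint (a + b) _),
    integral_const_mul, integral_const_mul, hval ha (by linarith), hval (by linarith) hab]

end TwoStep

section ConvexIntegral

variable {Ω : Type*} [MeasurableSpace Ω] {μ : Measure Ω} {x₀ r : ℝ}

lemma abs_le_of_convexOn_Icc {φ : ℝ → ℝ} (hφ : ConvexOn ℝ (Icc (x₀ - r) (x₀ + r)) φ) {x : ℝ}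
    (hx : x ∈ Icc (x₀ - r) (x₀ + r)) :
    |φ x| ≤ |φ (x₀ - r)| + |φ (x₀ + r)| + 2 * |φ x₀| := by
  have hr : x₀ - r ≤ x₀ + r := hx.1.trans hx.2
  have hupper {y : ℝ} (hy : y ∈ Icc (x₀ - r) (x₀ + r)) : φ y ≤ |φ (x₀ - r)| + |φ (x₀ + r)| := by
    refine (hφ.le_max_of_mem_Icc (left_mem_Icc.2 hr) (right_mem_Icc.2 hr) hy).trans (max_le ?_ ?_)
    · linarith [le_abs_self (φ (x₀ - r)), abs_nonneg (φ (x₀ + r))]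
    · linarith [le_abs_self (φ (x₀ + r)), abs_nonneg (φ (x₀ - r))]
  have hx' : 2 * x₀ - x ∈ Icc (x₀ - r) (x₀ + r) := ⟨by linarith [hx.2], by linarith [hx.1]⟩
  have hmid : φ x₀ ≤ (1 / 2) * φ x + (1 / 2) * φ (2 * x₀ - x) := by
    have h := hφ.2 hx hx' one_half_pos.le one_half_pos.le (add_halves 1)
    simp only [smul_eq_mul] at h
    rwa [← mul_add, add_sub_cancel, one_div, inv_mul_cancel_left₀ two_ne_zero, ← one_div] at h
  rw [abs_le]
  constructor <;> linarith [hupper hx, hupper hx', neg_abs_le (φ x₀), abs_nonneg (φ x₀)]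

lemma aestronglyMeasurable_of_hasDerivAt {φ : ℝ → Ω → ℝ} {φ' : Ω → ℝ} (hr : 0 < r)
    (hφ : ∀ x ∈ Ico x₀ (x₀ + r), AEStronglyMeasurable (φ x) μ)
    (hφ' : ∀ᵐ ω ∂μ, HasDerivAt (φ · ω) (φ' ω) x₀) : AEStronglyMeasurable φ' μ := by
  obtain ⟨u, -, hu_mem, hu⟩ := exists_seq_strictAnti_tendsto' (lt_add_of_pos_right x₀ hr)
  have hu' : Tendsto u atTop (𝓝[≠] x₀) :=
    tendsto_nhdsWithin_iff.2 ⟨hu, .of_forall fun n ↦ (hu_mem n).1.ne'⟩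
  refine aestronglyMeasurable_of_tendsto_ae atTop (f := fun n ω ↦ slope (φ · ω) x₀ (u n))
    (fun n ↦ ?_) ?_
  · exact ((hφ _ (Ioo_subset_Ico_self (hu_mem n))).sub
      (hφ _ (left_mem_Ico.2 (lt_add_of_pos_right x₀ hr)))).const_smul (u n - x₀)⁻¹
  · filter_upwards [hφ'] with ω hω
    exact (hasDerivAt_iff_tendsto_slope.1 hω).comp hu'

lemma hasDerivAt_integral_of_convexOn {φ : ℝ → Ω → ℝ} {φ' : Ω → ℝ} (hr : 0 < r)
    (hconv : ∀ᵐ ω ∂μ, ConvexOn ℝ (Icc (x₀ - r) (x₀ + r)) (φ · ω))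
    (hint : ∀ x ∈ Icc (x₀ - r) (x₀ + r), Integrable (φ x) μ)
    (hderiv : ∀ᵐ ω ∂μ, HasDerivAt (φ · ω) (φ' ω) x₀) :
    HasDerivAt (fun x ↦ ∫ ω, φ x ω ∂μ) (∫ ω, φ' ω ∂μ) x₀ := by
  have hball : Metric.ball x₀ r ⊆ Icc (x₀ - r) (x₀ + r) :=
    Real.closedBall_eq_Icc ▸ Metric.ball_subset_closedBall
  have hleft : x₀ - r ∈ Icc (x₀ - r) (x₀ + r) := by grind
  have hmid : x₀ ∈ Icc (x₀ - r) (x₀ + r) := by grind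
  have hright : x₀ + r ∈ Icc (x₀ - r) (x₀ + r) := by grind
  -- By convexity the values at `x₀ - r`, `x₀` and `x₀ + r` control a Lipschitz constant near `x₀`.
  let M ω := |φ (x₀ - r) ω| + |φ (x₀ + r) ω| + 2 * |φ x₀ ω|
  have hM : Integrable (fun ω ↦ 2 * M ω / (r / 2)) μ :=
    ((((hint _ hleft).abs.add (hint _ hright).abs).add
      ((hint _ hmid).abs.const_mul 2)).const_mul 2).div_const _
  refine (hasDerivAt_integral_of_dominated_loc_of_lip
    (Metric.ball_mem_nhds x₀ (by linarith : 0 < r - r / 2)) ?_ (hint _ hmid) ?_ ?_ hM hderiv).2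
  · filter_upwards [Metric.ball_mem_nhds x₀ hr] with x hx
    exact (hint x (hball hx)).aestronglyMeasurable
  · refine aestronglyMeasurable_of_hasDerivAt hr (fun x hx ↦ ?_) hderiv
    exact (hint x ⟨by linarith [hx.1], hx.2.le⟩).aestronglyMeasurable
  · filter_upwards [hconv] with ω hω
    exact ((hω.subset hball (convex_ball x₀ r)).lipschitzOnWith_of_abs_le (half_pos hr)
      fun x hx ↦ abs_le_of_convexOn_Icc hω (hball hx)).weaken
        ((Real.toNNReal_le_toNNReal (le_abs_self _)).trans_eq (Real.toNNReal_abs _))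

lemma convexOn_norm_rpow {E : Type*} [SeminormedAddCommGroup E] [NormedSpace ℝ E] {q : ℝ}
    (hq : 1 ≤ q) : ConvexOn ℝ univ fun x : E ↦ ‖x‖ ^ q := by
  refine ⟨convex_univ, fun x _ y _ α β hα hβ hαβ ↦ ?_⟩
  calc ‖α • x + β • y‖ ^ q ≤ (α • ‖x‖ + β • ‖y‖) ^ q :=
        Real.rpow_le_rpow (norm_nonneg _)
          (convexOn_univ_norm.2 (mem_univ x) (mem_univ y) hα hβ hαβ) (zero_le_one.trans hq)
    _ ≤ α • ‖x‖ ^ q + β • ‖y‖ ^ q :=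
        (convexOn_rpow hq).2 (norm_nonneg x) (norm_nonneg y) hα hβ hαβ

lemma differentiableAt_integral_abs_mul_add_rpow {q : ℝ} (hq : 1 < q) {F G : Ω → ℝ} (hr : 0 < r)
    (hint : ∀ x ∈ Icc (x₀ - r) (x₀ + r), Integrable (fun ω ↦ |x * F ω + G ω| ^ q) μ) :
    DifferentiableAt ℝ (fun x ↦ ∫ ω, |x * F ω + G ω| ^ q ∂μ) x₀ := by
  have hconv ω : ConvexOn ℝ (Icc (x₀ - r) (x₀ + r)) fun x ↦ |x * F ω + G ω| ^ q := by
    refine (((convexOn_norm_rpow hq.le).comp_affineMap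
      (AffineMap.lineMap (G ω) (F ω + G ω))).subset (subset_univ _) (convex_Icc _ _)).congr ?_
    exact fun x _ ↦ by simp [AffineMap.lineMap_apply]
  have hderiv ω := (hasDerivAt_abs_rpow (x₀ * F ω + G ω) hq).comp x₀
    (((hasDerivAt_id x₀).mul_const (F ω)).add_const (G ω))
  exact (hasDerivAt_integral_of_convexOn hr (.of_forall hconv) hint
    (.of_forall hderiv)).differentiableAt

end ConvexIntegral

section Additivity

lemma derivs_eq_of_eventuallyEq_nhdsGE_nhdsLE {f g h : ℝ → ℝ} {g' h' x₀ : ℝ}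
    (hf : DifferentiableAt ℝ f x₀) (hg : HasDerivAt g g' x₀) (hh : HasDerivAt h h' x₀)
    (hfg : f =ᶠ[𝓝[≥] x₀] g) (hfh : f =ᶠ[𝓝[≤] x₀] h) : g' = h' := by
  have hg' := hg.hasDerivWithinAt.congr_of_eventuallyEq_of_mem hfg self_mem_Ici
  have hh' := hh.hasDerivWithinAt.congr_of_eventuallyEq_of_mem hfh self_mem_Iic
  rw [(uniqueDiffWithinAt_Ici x₀).eq_deriv _ hg' hf.hasDerivAt.hasDerivWithinAt,
    (uniqueDiffWithinAt_Iic x₀).eq_deriv _ hh' hf.hasDerivAt.hasDerivWithinAt]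

variable {Ω : Type*} [MeasurableSpace Ω] {μ : Measure Ω} {q : ℝ}

lemma eq_add_of_integral_abs_mul_add_rpow {F G : Ω → ℝ} {α β γ : ℝ} (hq : 1 < q) (hα : 0 ≤ α)
    (hβ : 0 ≤ β) (hγ : 0 < γ)
    (hge : ∀ x, 1 ≤ x → ∫ ω, |x * F ω + G ω| ^ q ∂μ = (x ^ q - 1) * α + γ)
    (hle : ∀ x, 0 ≤ x → x ≤ 1 → ∫ ω, |x * F ω + G ω| ^ q ∂μ = (1 - x ^ q) * β + x ^ q * γ) :
    γ = α + β := by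
  have hq₀ : 0 ≤ q := by linarith
  have hpos {x : ℝ} (hx : 0 < x) : 0 < ∫ ω, |x * F ω + G ω| ^ q ∂μ := by
    have hxq : 0 < x ^ q := Real.rpow_pos_of_pos hx q
    rcases le_total 1 x with h | h
    · have := Real.one_le_rpow h hq₀
      rw [hge x h]
      nlinarith
    · have := Real.rpow_le_one hx.le h hq₀
      rw [hle x hx.le h]
      nlinarith [mul_pos hxq hγ]
  have hdiff : DifferentiableAt ℝ (fun x ↦ ∫ ω, |x * F ω + G ω| ^ q ∂μ) 1 :=
    differentiableAt_integral_abs_mul_add_rpow hq one_half_pos fun x hx ↦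
      .of_integral_ne_zero (hpos (by linarith [hx.1])).ne'
  have hrpow : HasDerivAt (fun x : ℝ ↦ x ^ q) q 1 := by
    simpa using Real.hasDerivAt_rpow_const (p := q) (.inl one_ne_zero)
  have hderivs := derivs_eq_of_eventuallyEq_nhdsGE_nhdsLE hdiff
    (((hrpow.sub_const 1).mul_const α).add_const γ)
    (((hrpow.const_sub 1).mul_const β).add (hrpow.mul_const γ))
    (eventually_nhdsWithin_of_forall hge)
    (by filter_upwards [Icc_mem_nhdsLE zero_lt_one] with x hx using hle x hx.1 hx.2)
  have : q * (γ - (α + β)) = 0 := by linear_combination -hderivs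
  grind

lemma integral_abs_map_twoStep_rpow {w : ℝ → ℝ} {A B : Set ℝ} {a b y z : ℝ} (hq : q ≠ 0)
    (hw : IntegrableOn w (Ioo 0 1)) {T : (ℝ → ℝ) → Ω → ℝ}
    (hT : ∀ f : ℝ → ℝ, Measurable f →
      ∫⁻ t in Ioo (0 : ℝ) 1, ENNReal.ofReal (decRearr f t ^ q * w t) < ⊤ →
      ∫ ω, |T f ω| ^ q ∂μ = ∫ t in Ioo (0 : ℝ) 1, decRearr f t ^ q * w t)
    (hA : A ⊆ Ioo 0 1) (hB : B ⊆ Ioo 0 1) (hAm : MeasurableSet A) (hBm : MeasurableSet B)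
    (hAB : Disjoint A B) (ha : 0 ≤ a) (hb : 0 ≤ b) (hab : a + b ≤ 1)
    (hAv : volume A = ENNReal.ofReal a) (hBv : volume B = ENNReal.ofReal b) (hz : 0 ≤ z)
    (hzy : z ≤ y) :
    ∫ ω, |T (twoStep A B y z) ω| ^ q ∂μ =
      (y ^ q - z ^ q) * (∫ t in 0..a, w t) + z ^ q * ∫ t in 0..(a + b), w t := by
  obtain ⟨hint, hval⟩ :=
    integral_decRearr_twoStep hw hA hB hBm hAB ha hb hab hAv hBv hz hzy hq
  rw [hT _ (measurable_twoStep hAm hBm y z) hint.lintegral_lt_top, hval]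

lemma intervalIntegral_add_of_isometry {w : ℝ → ℝ} {a b : ℝ} (hq : 1 < q)
    (hw_pos : ∀ t ∈ Ioo (0 : ℝ) 1, 0 < w t) (hw : IntegrableOn w (Ioo 0 1))
    {T : (ℝ → ℝ) →ₗ[ℝ] (Ω → ℝ)}
    (hT : ∀ f : ℝ → ℝ, Measurable f →
      ∫⁻ t in Ioo (0 : ℝ) 1, ENNReal.ofReal (decRearr f t ^ q * w t) < ⊤ →
      ∫ ω, |T f ω| ^ q ∂μ = ∫ t in Ioo (0 : ℝ) 1, decRearr f t ^ q * w t)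
    (ha : 0 < a) (hb : 0 < b) (hab : a + b ≤ 1) :
    ∫ t in 0..(a + b), w t = (∫ t in 0..a, w t) + ∫ t in 0..b, w t := by
  have hq₀ : q ≠ 0 := by linarith
  have hW {c : ℝ} (hc₀ : 0 < c) (hc₁ : c ≤ 1) : 0 < ∫ t in 0..c, w t := by
    have hsub : Ioo 0 c ⊆ Ioo 0 1 := Ioo_subset_Ioo_right hc₁
    exact intervalIntegral.intervalIntegral_pos_of_pos_on
      ((intervalIntegrable_iff_integrableOn_Ioo_of_le hc₀.le).2 (hw.mono_set hsub))
      (fun t ht ↦ hw_pos t (hsub ht)) hc₀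
  let A : Set ℝ := Ioo 0 a
  let B : Set ℝ := Ico a (a + b)
  have hA : A ⊆ Ioo 0 1 := Ioo_subset_Ioo_right (by linarith)
  have hB : B ⊆ Ioo 0 1 := fun t ht ↦ ⟨ha.trans_le ht.1, ht.2.trans_le hab⟩
  have hAB : Disjoint A B := disjoint_left.2 fun t htA htB ↦ htA.2.not_ge htB.1
  have hAv : volume A = ENNReal.ofReal a := by simp [A]
  have hBv : volume B = ENNReal.ofReal b := by simp [B]
  have hT_twoStep (x : ℝ) (ω : Ω) :
      x * T (A.indicator 1) ω + T (B.indicator 1) ω = T (twoStep A B x 1) ω := by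
    simp [twoStep]
  refine eq_add_of_integral_abs_mul_add_rpow (μ := μ) (F := T (A.indicator 1))
    (G := T (B.indicator 1)) hq (hW ha (by linarith)).le (hW hb (by linarith)).le
    (hW (add_pos ha hb) hab) (fun x hx ↦ ?_) fun x hx₀ hx₁ ↦ ?_ <;> simp_rw [hT_twoStep]
  · rw [integral_abs_map_twoStep_rpow hq₀ hw hT hA hB measurableSet_Ioo measurableSet_Ico hAB ha.le
      hb.le hab hAv hBv zero_le_one hx, Real.one_rpow, one_mul]
  · rw [twoStep_comm, integral_abs_map_twoStep_rpow hq₀ hw hT hB hA measurableSet_Ico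
      measurableSet_Ioo hAB.symm hb.le ha.le (add_comm a b ▸ hab) hBv hAv hx₀ hx₁, Real.one_rpow,
      add_comm b a]

end Additivity

section Differentiation

lemma ae_eq_const_of_intervalIntegral_add {w : ℝ → ℝ} {L : ℝ} (hw : IntegrableOn w (Ioo 0 L))
    (hadd : ∀ a b, 0 < a → 0 < b → a + b ≤ L →
      ∫ t in 0..(a + b), w t = (∫ t in 0..a, w t) + ∫ t in 0..b, w t) :
    ∃ c, ∀ᵐ t ∂volume.restrict (Ioo 0 L), w t = c := by
  let W x := ∫ t in 0..x, w t
  rcases le_or_gt L 0 with hL | hL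
  · simp [hL]
  refine ⟨derivWithin W (Ici 0) 0, (ae_restrict_iff' measurableSet_Ioo).2 ?_⟩
  have hw' : IntervalIntegrable w volume 0 L :=
    (intervalIntegrable_iff_integrableOn_Ioo_of_le hL.le).2 hw
  filter_upwards [hw'.ae_hasDerivAt_integral] with x hderiv hx
  have hWx : HasDerivAt (fun h ↦ W (x + h) - W x) (w x) 0 := by
    have h := hderiv (uIcc_of_le hL.le ▸ Ioo_subset_Icc_self hx) 0 left_mem_uIcc
    rw [← add_zero x] at h
    simpa using (h.comp_const_add x 0).sub_const (W x)
  have hW : W =ᶠ[𝓝[≥] 0] fun h ↦ W (x + h) - W x := by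
    filter_upwards [Icc_mem_nhdsGE (sub_pos.2 hx.2)] with h hh
    rcases hh.1.eq_or_lt with rfl | hh₀
    · simp [W]
    · exact (sub_eq_of_eq_add' (hadd x h hx.1 hh₀ (by linarith [hh.2]))).symm
  exact ((hWx.hasDerivWithinAt.congr_of_eventuallyEq_of_mem hW self_mem_Ici).derivWithin
    (uniqueDiffWithinAt_Ici 0)).symm

end Differentiation

theorem stmt3_general (q : ℝ) (hq : 1 < q) (w : ℝ → ℝ)
    (hw_pos : ∀ t ∈ Ioo (0 : ℝ) 1, 0 < w t)
    (hw_int : (∫ t in Ioo (0 : ℝ) 1, w t) = 1) :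
    (∃ (Ω : Type) (_ : MeasurableSpace Ω) (μ : Measure Ω)
        (T : (ℝ → ℝ) →ₗ[ℝ] (Ω → ℝ)),
      ∀ f : ℝ → ℝ, Measurable f →
        (∫⁻ t in Ioo (0 : ℝ) 1, ENNReal.ofReal (decRearr f t ^ q * w t)) < ⊤ →
        (∫ ω, |T f ω| ^ q ∂μ) = ∫ t in Ioo (0 : ℝ) 1, decRearr f t ^ q * w t) ↔
    (∀ᵐ t ∂(volume.restrict (Ioo (0 : ℝ) 1)), w t = 1) := by
  constructor
  · rintro ⟨Ω, _, μ, T, hT⟩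
    have hw : IntegrableOn w (Ioo 0 1) := .of_integral_ne_zero (hw_int.trans_ne one_ne_zero)
    obtain ⟨c, hc⟩ := ae_eq_const_of_intervalIntegral_add hw fun a b ↦
      intervalIntegral_add_of_isometry hq hw_pos hw hT
    have hc₁ : c = 1 := by simpa [integral_congr_ae hc] using hw_int
    exact hc₁ ▸ hc
  · intro hw
    refine ⟨ℝ, inferInstance, volume.restrict (Ioo 0 1), LinearMap.id, fun f hf _ ↦ ?_⟩
    rw [LinearMap.id_apply, ← integral_decRearr_rpow hf]
    refine integral_congr_ae ?_
    filter_upwards [hw] with t ht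
    rw [ht, mul_one]

/-- For `q > 1` and a positive non-increasing weight `w` on `(0,1)` with
`∫_0^1 w = 1`, the Lorentz function space `L_{w,q}(0,1)` is isometric to a
subspace of `L_q` iff `w = 1` a.e. on `(0,1)` (so that `L_{w,q} = L_q`). -/
theorem stmt3 (q : ℝ) (hq : 1 < q) (w : ℝ → ℝ)
    (hw_pos : ∀ t ∈ Ioo (0:ℝ) 1, 0 < w t)
    (hw_anti : ∀ s t, s ∈ Ioo (0:ℝ) 1 → t ∈ Ioo (0:ℝ) 1 → s ≤ t → w t ≤ w s)
    (hw_int : (∫ t in Ioo (0:ℝ) 1, w t) = 1) :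
    (∃ (Ω : Type) (_ : MeasurableSpace Ω) (μ : Measure Ω)
        (T : (ℝ → ℝ) →ₗ[ℝ] (Ω → ℝ)),
      ∀ f : ℝ → ℝ, Measurable f →
        (∫⁻ t in Ioo (0:ℝ) 1, ENNReal.ofReal (decRearr f t ^ q * w t)) < ⊤ →
        (∫ ω, |T f ω| ^ q ∂μ) = ∫ t in Ioo (0:ℝ) 1, decRearr f t ^ q * w t) ↔
    (∀ᵐ t ∂(volume.restrict (Ioo (0:ℝ) 1)), w t = 1) :=
  stmt3_general q hq w hw_pos hw_int
end

section
/- Let 0 < q < ∞ and let (a_k)_{k≥1} be a non-increasing sequence of positive real numbers with Σ_{k=1}^∞ a_k = ∞. Let c_00 denote the space of finitely supported real sequences equipped with ‖x‖_{w,q} = (Σ_{k=1}^∞ a_k (x_k^*)^q)^{1/q}, where x^* is the non-increasing rearrangement of (|x_1|, |x_2|, …) (which is eventually zero). Then there exist a measure space (Ω, Σ, μ) and a linear map T : c_00 → L_q(μ) with ∫_Ω |Tx|^q dμ = ‖x‖_{w,q}^q for all x ∈ c_00 if and only if the sequence (a_k) is constant. -/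
/-!
For constant weights the Lorentz functional is a multiple of `∑ |x i| ^ q`, which a multiple of
counting measure realizes.

Conversely, let `N x = ∑ a_k (x_k^*) ^ q = ∫ |T x| ^ q`. For `q ≥ 2`, Clarkson's inequality
`|u + v| ^ q + |u - v| ^ q ≥ 2 |u| ^ q + 2 |v| ^ q`, applied to `T (e_0 + ⋯ + e_{k-1})` and `T e_k`,
integrates to `a k ≥ a 0`.

For `0 < q < 2` the kernel `|u - v| ^ q` is conditionally negative definite, hence so is
`N (x - y)`. Test it on the grid `{0, …, m} ^ (n + 1)` with product coefficients `∏ c_i (p_i)`, each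
`c_i` having sum zero. By the layer-cake formula, `N` of an integer vector is a combination over the
levels `w` of the partial sums of `a` up to the number of coordinates of modulus above `w`; each
level of the quadratic form factorizes, and the result is
`(∑_w ((w + 1) ^ q - w ^ q) ∏_i F_i w) * (Δ^n a) 0 ≤ 0`, where `F_i w` is the sum of
`c_i r * c_i s` over `|r - s| > w`. Taking every `c_i = (1, -1)` gives `(-1) ^ n (Δ^n a) 0 ≥ 0`.
Taking one factor `(1, -2, 1, 0)` and `n` factors `(1, 1, -1, -1)` gives the opposite inequality for
large `n`. Hence all high differences of `a` vanish at `0`, so `a` is a polynomial sequence; being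
convergent, it is constant.
-/

open MeasureTheory

/-- The non-increasing rearrangement of the sequence `(|x 0|, |x 1|, …)`:
`x^*_k = inf { s ≥ 0 : #{ i : |x i| > s } ≤ k }` (0-indexed). -/
noncomputable def seqStar (x : ℕ → ℝ) (k : ℕ) : ℝ :=
  sInf {s : ℝ | 0 ≤ s ∧ Nat.card {i : ℕ | s < |x i|} ≤ k}

open Filter Finset
open scoped Topology

/-! ### Negative type and Clarkson inequalities -/

section NegativeType

variable {q : ℝ}

lemma integrableOn_one_sub_cos_mul_rpow (hq : 0 < q) (hq2 : q < 2) :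
    IntegrableOn (fun ξ : ℝ => (1 - Real.cos ξ) * ξ ^ (-1 - q)) (Set.Ioi 0) := by
  have hmeas : Measurable fun ξ : ℝ => (1 - Real.cos ξ) * ξ ^ (-1 - q) := by fun_prop
  have norm_eq {ξ : ℝ} (hξ : 0 < ξ) :
      ‖(1 - Real.cos ξ) * ξ ^ (-1 - q)‖ = (1 - Real.cos ξ) * ξ ^ (-1 - q) :=
    Real.norm_of_nonneg (mul_nonneg (by linarith [Real.cos_le_one ξ]) (Real.rpow_nonneg hξ.le _))
  have near_zero : IntegrableOn (fun ξ : ℝ => (1 - Real.cos ξ) * ξ ^ (-1 - q)) (Set.Ioc 0 1) := by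
    have dominating : IntegrableOn (fun ξ : ℝ => ξ ^ (1 - q)) (Set.Ioc 0 1) :=
      (intervalIntegrable_iff_integrableOn_Ioc_of_le zero_le_one).1
        (intervalIntegral.intervalIntegrable_rpow' (by linarith))
    refine dominating.mono' hmeas.aestronglyMeasurable
      ((ae_restrict_iff' measurableSet_Ioc).2 (.of_forall fun ξ hξ => ?_))
    have hpow : ξ ^ (1 - q) = ξ ^ 2 * ξ ^ (-1 - q) := by
      rw [← Real.rpow_natCast, ← Real.rpow_add hξ.1]
      congr 1
      push_cast
      ring
    rw [norm_eq hξ.1, hpow]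
    have := Real.rpow_nonneg hξ.1.le (-1 - q)
    gcongr
    linarith [Real.one_sub_sq_div_two_le_cos (x := ξ), sq_nonneg ξ]
  have near_top : IntegrableOn (fun ξ : ℝ => (1 - Real.cos ξ) * ξ ^ (-1 - q)) (Set.Ioi 1) := by
    have dominating : IntegrableOn (fun ξ : ℝ => 2 * ξ ^ (-1 - q)) (Set.Ioi 1) :=
      (integrableOn_Ioi_rpow_of_lt (by linarith) one_pos).const_mul 2
    refine dominating.mono' hmeas.aestronglyMeasurable
      ((ae_restrict_iff' measurableSet_Ioi).2 (.of_forall fun ξ hξ => ?_))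
    have hξ0 : 0 < ξ := one_pos.trans hξ
    rw [norm_eq hξ0]
    have := Real.rpow_nonneg hξ0.le (-1 - q)
    gcongr
    linarith [Real.neg_one_le_cos ξ]
  rw [← Set.Ioc_union_Ioi_eq_Ioi zero_le_one]
  exact near_zero.union near_top

lemma integral_one_sub_cos_mul_rpow_pos (hq : 0 < q) (hq2 : q < 2) :
    0 < ∫ ξ in Set.Ioi (0 : ℝ), (1 - Real.cos ξ) * ξ ^ (-1 - q) := by
  have nonneg : 0 ≤ᵐ[volume.restrict (Set.Ioi (0 : ℝ))]
      fun ξ : ℝ => (1 - Real.cos ξ) * ξ ^ (-1 - q) :=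
    (ae_restrict_iff' measurableSet_Ioi).2 (.of_forall fun ξ hξ =>
      mul_nonneg (by linarith [Real.cos_le_one ξ]) (Real.rpow_nonneg (le_of_lt hξ) _))
  rw [setIntegral_pos_iff_support_of_nonneg_ae nonneg (integrableOn_one_sub_cos_mul_rpow hq hq2)]
  have subset_support : Set.Ioo (0 : ℝ) 1 ⊆
      Function.support (fun ξ : ℝ => (1 - Real.cos ξ) * ξ ^ (-1 - q)) ∩ Set.Ioi 0 := by
    intro ξ ⟨hξ0, hξ1⟩
    have cos_lt_one : Real.cos ξ < 1 := by
      rw [← Real.cos_zero]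
      exact Real.cos_lt_cos_of_nonneg_of_le_pi le_rfl (by linarith [Real.pi_gt_three]) hξ0
    exact ⟨mul_ne_zero (by linarith) (Real.rpow_pos_of_pos hξ0 _).ne', hξ0⟩
  calc (0 : ENNReal) < volume (Set.Ioo (0 : ℝ) 1) := by simp
    _ ≤ _ := measure_mono subset_support

lemma one_sub_cos_mul_mul_rpow_eq {u ξ : ℝ} (hu : u ≠ 0) (hξ : 0 < ξ) :
    (1 - Real.cos (u * ξ)) * ξ ^ (-1 - q) =
      |u| ^ (1 + q) * ((1 - Real.cos (|u| * ξ)) * (|u| * ξ) ^ (-1 - q)) := by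
  have hu' : 0 < |u| := abs_pos.2 hu
  have hcos : Real.cos (u * ξ) = Real.cos (|u| * ξ) := by
    rw [← Real.cos_abs (u * ξ), abs_mul, abs_of_pos hξ]
  have hpow : |u| ^ (1 + q) * |u| ^ (-1 - q) = 1 := by
    rw [← Real.rpow_add hu']
    simp
  rw [hcos, Real.mul_rpow hu'.le hξ.le]
  linear_combination (-(1 - Real.cos (|u| * ξ)) * ξ ^ (-1 - q)) * hpow

lemma integrableOn_one_sub_cos_mul_mul_rpow (hq : 0 < q) (hq2 : q < 2) (u : ℝ) :
    IntegrableOn (fun ξ : ℝ => (1 - Real.cos (u * ξ)) * ξ ^ (-1 - q)) (Set.Ioi 0) := by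
  rcases eq_or_ne u 0 with rfl | hu
  · simp
  have scaled : IntegrableOn
      (fun ξ : ℝ => (1 - Real.cos (|u| * ξ)) * (|u| * ξ) ^ (-1 - q)) (Set.Ioi 0) :=
    (integrableOn_Ioi_comp_mul_left_iff
      (fun ξ : ℝ => (1 - Real.cos ξ) * ξ ^ (-1 - q)) 0 (abs_pos.2 hu)).2
      (by simpa using integrableOn_one_sub_cos_mul_rpow hq hq2)
  exact (integrableOn_congr_fun (fun ξ hξ => one_sub_cos_mul_mul_rpow_eq hu hξ)
    measurableSet_Ioi).2 (scaled.const_mul (|u| ^ (1 + q)))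

lemma integral_one_sub_cos_mul_mul_rpow (hq : q ≠ 0) (u : ℝ) :
    ∫ ξ in Set.Ioi (0 : ℝ), (1 - Real.cos (u * ξ)) * ξ ^ (-1 - q) =
      |u| ^ q * ∫ ξ in Set.Ioi (0 : ℝ), (1 - Real.cos ξ) * ξ ^ (-1 - q) := by
  rcases eq_or_ne u 0 with rfl | hu
  · simp [Real.zero_rpow hq]
  have hu' : 0 < |u| := abs_pos.2 hu
  rw [setIntegral_congr_fun measurableSet_Ioi fun ξ hξ => one_sub_cos_mul_mul_rpow_eq hu hξ,
    integral_const_mul,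
    integral_comp_mul_left_Ioi (fun ξ : ℝ => (1 - Real.cos ξ) * ξ ^ (-1 - q)) 0 hu',
    mul_zero, smul_eq_mul, ← mul_assoc, Real.rpow_add hu', Real.rpow_one]
  field_simp

variable {ι : Type*} [Fintype ι] {c : ι → ℝ}

lemma sum_mul_one_sub_cos_sub_nonpos (hc : ∑ i, c i = 0) (u : ι → ℝ) :
    ∑ i, ∑ j, c i * c j * (1 - Real.cos (u i - u j)) ≤ 0 := by
  have sum_squares : ∑ i, ∑ j, c i * c j * (1 - Real.cos (u i - u j)) =
      (∑ i, c i) * (∑ j, c j) - (∑ i, c i * Real.cos (u i)) * (∑ j, c j * Real.cos (u j))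
        - (∑ i, c i * Real.sin (u i)) * (∑ j, c j * Real.sin (u j)) := by
    simp only [sum_mul_sum, ← sum_sub_distrib]
    refine sum_congr rfl fun i _ => sum_congr rfl fun j _ => ?_
    rw [Real.cos_sub]
    ring
  rw [sum_squares, hc]
  linarith [mul_self_nonneg (∑ i, c i * Real.cos (u i)),
    mul_self_nonneg (∑ i, c i * Real.sin (u i))]

-- Integrate the preceding inequality against `ξ ^ (-1 - q) dξ`: by scaling,
-- `∫ (1 - cos (u ξ)) ξ ^ (-1 - q) dξ` is a positive multiple of `|u| ^ q`.
lemma sum_mul_abs_sub_rpow_nonpos (hq : 0 < q) (hq2 : q < 2) (hc : ∑ i, c i = 0) (u : ι → ℝ) :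
    ∑ i, ∑ j, c i * c j * |u i - u j| ^ q ≤ 0 := by
  refine nonpos_of_mul_nonpos_left ?_ (integral_one_sub_cos_mul_rpow_pos hq hq2)
  have hint (i j : ι) : IntegrableOn (fun ξ : ℝ =>
      c i * c j * ((1 - Real.cos ((u i - u j) * ξ)) * ξ ^ (-1 - q))) (Set.Ioi 0) :=
    (integrableOn_one_sub_cos_mul_mul_rpow hq hq2 _).const_mul _
  calc (∑ i, ∑ j, c i * c j * |u i - u j| ^ q) *
        ∫ ξ in Set.Ioi (0 : ℝ), (1 - Real.cos ξ) * ξ ^ (-1 - q)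
      = ∑ i, ∑ j, ∫ ξ in Set.Ioi (0 : ℝ),
          c i * c j * ((1 - Real.cos ((u i - u j) * ξ)) * ξ ^ (-1 - q)) := by
        simp only [sum_mul, integral_const_mul, integral_one_sub_cos_mul_mul_rpow hq.ne',
          mul_assoc]
    _ = ∫ ξ in Set.Ioi (0 : ℝ), (∑ i, ∑ j,
          c i * c j * (1 - Real.cos (u i * ξ - u j * ξ))) * ξ ^ (-1 - q) := by
        simp only [sum_mul, ← sub_mul, mul_assoc (_ * _)]
        rw [integral_finsetSum _ fun i _ => integrable_finsetSum _ fun j _ => hint i j]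
        simp only [integral_finsetSum _ fun j _ => hint _ j]
    _ ≤ 0 := setIntegral_nonpos measurableSet_Ioi fun ξ hξ =>
        mul_nonpos_of_nonpos_of_nonneg (sum_mul_one_sub_cos_sub_nonpos hc _)
          (Real.rpow_nonneg (le_of_lt hξ) _)

lemma sum_mul_integral_abs_sub_rpow_nonpos (hq : 0 < q) (hq2 : q < 2) (hc : ∑ i, c i = 0)
    {Ω : Type*} [MeasurableSpace Ω] {μ : Measure Ω} {f : ι → Ω → ℝ}
    (hf : ∀ i j, Integrable (fun ω => |f i ω - f j ω| ^ q) μ) :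
    ∑ i, ∑ j, c i * c j * ∫ ω, |f i ω - f j ω| ^ q ∂μ ≤ 0 := by
  have hint (i j : ι) : Integrable (fun ω => c i * c j * |f i ω - f j ω| ^ q) μ :=
    (hf i j).const_mul _
  calc ∑ i, ∑ j, c i * c j * ∫ ω, |f i ω - f j ω| ^ q ∂μ
      = ∫ ω, ∑ i, ∑ j, c i * c j * |f i ω - f j ω| ^ q ∂μ := by
        rw [integral_finsetSum _ fun i _ => integrable_finsetSum _ fun j _ => hint i j]
        simp only [integral_finsetSum _ fun j _ => hint _ j, integral_const_mul]
    _ ≤ 0 := integral_nonpos fun ω => sum_mul_abs_sub_rpow_nonpos hq hq2 hc fun i => f i ω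

end NegativeType

lemma clarkson_abs_rpow {q : ℝ} (hq : 2 ≤ q) (u v : ℝ) :
    2 * (|u| ^ q + |v| ^ q) ≤ |u + v| ^ q + |u - v| ^ q := by
  have abs_rpow (t : ℝ) : |t| ^ q = (t ^ 2) ^ (q / 2) := by
    rw [← sq_abs, ← Real.rpow_natCast_mul (abs_nonneg t)]
    congr 1
    push_cast
    ring
  have hp : 1 ≤ q / 2 := by linarith
  have superadditive : (u ^ 2) ^ (q / 2) + (v ^ 2) ^ (q / 2) ≤ (u ^ 2 + v ^ 2) ^ (q / 2) :=
    Real.add_rpow_le_rpow_add (sq_nonneg u) (sq_nonneg v) hp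
  have midpoint_convex := (convexOn_rpow hp).2 (sq_nonneg (u + v)) (sq_nonneg (u - v))
    one_half_pos.le one_half_pos.le (add_halves 1)
  have parallelogram : (1 / 2 : ℝ) • (u + v) ^ 2 + (1 / 2 : ℝ) • (u - v) ^ 2 = u ^ 2 + v ^ 2 := by
    simp only [smul_eq_mul]
    ring
  rw [parallelogram] at midpoint_convex
  simp only [smul_eq_mul] at midpoint_convex
  simp only [abs_rpow]
  linarith

lemma clarkson_integral_abs_rpow {q : ℝ} (hq : 2 ≤ q) {Ω : Type*} [MeasurableSpace Ω]
    {μ : Measure Ω} {f g : Ω → ℝ} (hf : Integrable (fun ω => |f ω| ^ q) μ)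
    (hg : Integrable (fun ω => |g ω| ^ q) μ) (hadd : Integrable (fun ω => |f ω + g ω| ^ q) μ)
    (hsub : Integrable (fun ω => |f ω - g ω| ^ q) μ) :
    2 * (∫ ω, |f ω| ^ q ∂μ + ∫ ω, |g ω| ^ q ∂μ) ≤
      ∫ ω, |f ω + g ω| ^ q ∂μ + ∫ ω, |f ω - g ω| ^ q ∂μ := by
  rw [← integral_add hf hg, ← integral_const_mul, ← integral_add hadd hsub]
  exact integral_mono ((hf.add hg).const_mul 2) (hadd.add hsub) fun ω =>
    clarkson_abs_rpow hq (f ω) (g ω)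

/-! ### The non-increasing rearrangement -/

lemma lt_natCard_iff_mem {s : Set ℕ} (hs : IsLowerSet s) (hfin : s.Finite) {k : ℕ} :
    k < Nat.card s ↔ k ∈ s := by
  rcases hs.eq_univ_or_Iio with rfl | ⟨n, rfl⟩
  · exact absurd hfin Set.infinite_univ
  · simp

lemma finite_setOf_lt_abs (x : ℕ →₀ ℝ) {s : ℝ} (hs : 0 ≤ s) : {i | s < |x i|}.Finite :=
  x.hasFiniteSupport.subset fun _ hi => abs_pos.1 (hs.trans_lt hi)

lemma exists_perm_antitone_abs (x : ℕ →₀ ℝ) :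
    ∃ σ : Equiv.Perm ℕ, Antitone fun k => |x (σ k)| := by
  obtain ⟨n, hn⟩ : ∃ n, ∀ i, n ≤ i → x i = 0 := by
    obtain ⟨b, hb⟩ := x.support.bddAbove
    refine ⟨b + 1, fun i hi => Finsupp.notMem_support_iff.1 fun hmem => ?_⟩
    exact absurd (hb hmem) (by omega)
  let τ := Tuple.sort fun i : Fin n => OrderDual.toDual |x i|
  have anti : Antitone fun i : Fin n => |x (τ i)| := fun _ _ hij =>
    Tuple.monotone_sort (fun i : Fin n => OrderDual.toDual |x i|) hij
  let σ := τ.extendDomain Fin.equivSubtype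
  have σ_lt (i : Fin n) : σ i = τ i := τ.extendDomain_apply_image Fin.equivSubtype i
  have σ_ge {k : ℕ} (hk : n ≤ k) : σ k = k := τ.extendDomain_apply_not_subtype _ hk.not_gt
  refine ⟨σ, fun j k hjk => ?_⟩
  rcases lt_or_ge k n with hk | hk
  · simpa only [← σ_lt] using anti (a := ⟨j, hjk.trans_lt hk⟩) (b := ⟨k, hk⟩) hjk
  · simp only [σ_ge hk, hn k hk, abs_zero, abs_nonneg]

lemma lt_natCard_setOf_lt_abs_iff {x : ℕ →₀ ℝ} {σ : Equiv.Perm ℕ}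
    (hσ : Antitone fun k => |x (σ k)|) {s : ℝ} (hs : 0 ≤ s) {k : ℕ} :
    k < Nat.card {i | s < |x i|} ↔ s < |x (σ k)| := by
  have card_eq : Nat.card {i | s < |x i|} = Nat.card {j | s < |x (σ j)|} :=
    Nat.card_congr (σ.subtypeEquiv fun _ => Iff.rfl).symm
  rw [card_eq]
  exact lt_natCard_iff_mem (s := {j | s < |x (σ j)|})
    (fun _ _ hji (hi : s < _) => hi.trans_le (hσ hji))
    ((finite_setOf_lt_abs x hs).preimage (f := σ) σ.injective.injOn)

lemma seqStar_eq_abs_perm {x : ℕ →₀ ℝ} {σ : Equiv.Perm ℕ}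
    (hσ : Antitone fun k => |x (σ k)|) (k : ℕ) : seqStar x k = |x (σ k)| := by
  have levels : {s : ℝ | 0 ≤ s ∧ Nat.card {i | s < |x i|} ≤ k} = Set.Ici |x (σ k)| := by
    ext s
    constructor
    · rintro ⟨hs, hcard⟩
      exact not_lt.1 (mt (lt_natCard_setOf_lt_abs_iff hσ hs).2 hcard.not_gt)
    · intro h
      have hs : 0 ≤ s := (abs_nonneg _).trans h
      exact ⟨hs, not_lt.1 (mt (lt_natCard_setOf_lt_abs_iff hσ hs).1 (not_lt.2 h))⟩
  rw [seqStar, levels, csInf_Ici]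

lemma exists_perm_seqStar (x : ℕ →₀ ℝ) :
    ∃ σ : Equiv.Perm ℕ, ∀ k, seqStar x k = |x (σ k)| :=
  (exists_perm_antitone_abs x).imp fun _ hσ => seqStar_eq_abs_perm hσ

lemma lt_seqStar_iff (x : ℕ →₀ ℝ) {s : ℝ} (hs : 0 ≤ s) (k : ℕ) :
    s < seqStar x k ↔ k < Nat.card {i | s < |x i|} := by
  obtain ⟨σ, hσ⟩ := exists_perm_antitone_abs x
  rw [seqStar_eq_abs_perm hσ, lt_natCard_setOf_lt_abs_iff hσ hs]

/-! ### The Lorentz functional -/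

/-- The `q`-th power `∑ a_k (x_k^*) ^ q` of the Lorentz `q`-norm with weights `a`. -/
noncomputable def lorentzPow (q : ℝ) (a : ℕ → ℝ) (x : ℕ →₀ ℝ) : ℝ :=
  ∑' k, a k * seqStar x k ^ q

/-- The weight `(w + 1) ^ q - w ^ q` of the level `w` in the layer-cake decomposition of the
`q`-th power of a natural number. -/
noncomputable def levelGap (q : ℝ) (w : ℕ) : ℝ := (w + 1 : ℝ) ^ q - (w : ℝ) ^ q

section LorentzPow

variable {q : ℝ} {a : ℕ → ℝ}

lemma lorentzPow_of_const (q : ℝ) {b : ℝ} (ha : ∀ k, a k = b) (x : ℕ →₀ ℝ) :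
    lorentzPow q a x = b * ∑' i, |x i| ^ q := by
  obtain ⟨σ, hσ⟩ := exists_perm_seqStar x
  simp only [lorentzPow, ha, hσ, tsum_mul_left]
  rw [σ.tsum_eq fun i => |x i| ^ q]

lemma lorentzPow_pos (hq : q ≠ 0) (ha0 : 0 < a 0) (ha : ∀ k, 0 ≤ a k) {x : ℕ →₀ ℝ}
    (hx : x ≠ 0) : 0 < lorentzPow q a x := by
  obtain ⟨σ, hσ⟩ := exists_perm_seqStar x
  have term_nonneg (k : ℕ) : 0 ≤ a k * seqStar x k ^ q := by
    rw [hσ]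
    exact mul_nonneg (ha k) (Real.rpow_nonneg (abs_nonneg _) q)
  have summable : Summable fun k => a k * seqStar x k ^ q := by
    refine summable_of_hasFiniteSupport
      ((x.hasFiniteSupport.preimage σ.injective.injOn).subset fun k hk => ?_)
    contrapose! hk
    simp_all [Real.zero_rpow]
  have star_pos : 0 < seqStar x 0 := by
    obtain ⟨i, hi⟩ := Finsupp.ne_iff.1 hx
    rw [lt_seqStar_iff x le_rfl, Nat.card_pos_iff]
    exact ⟨⟨i, abs_pos.2 hi⟩, finite_setOf_lt_abs x le_rfl⟩
  exact summable.tsum_pos term_nonneg 0 (mul_pos ha0 (Real.rpow_pos_of_pos star_pos q))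

lemma levelGap_zero (hq : q ≠ 0) : levelGap q 0 = 1 := by
  simp [levelGap, Real.zero_rpow hq]

lemma natCast_rpow_eq_sum_levelGap (hq : q ≠ 0) {n W : ℕ} (hn : n ≤ W) :
    (n : ℝ) ^ q = ∑ w ∈ range W, if w < n then levelGap q w else 0 := by
  have filter_eq : (range W).filter (· < n) = range n := by
    ext w
    simp only [mem_filter, mem_range]
    omega
  have telescope := sum_range_sub (fun w : ℕ => (w : ℝ) ^ q) n
  rw [← sum_filter, filter_eq]
  simpa [levelGap, Real.zero_rpow hq] using telescope.symm

lemma lorentzPow_eq_sum_levelGap (hq : q ≠ 0) (a : ℕ → ℝ) {x : ℕ →₀ ℝ} {m : ℕ → ℕ} {W : ℕ}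
    (hm : ∀ i, |x i| = m i) (hW : ∀ i, m i ≤ W) :
    lorentzPow q a x =
      ∑ w ∈ range W, levelGap q w * ∑ k ∈ range (Nat.card {i | w < m i}), a k := by
  obtain ⟨σ, hσ⟩ := exists_perm_seqStar x
  have lt_iff (w k : ℕ) : w < m (σ k) ↔ k < Nat.card {i | w < m i} := by
    simpa [hσ, hm] using lt_seqStar_iff x w.cast_nonneg k
  have term_eq (k : ℕ) : a k * seqStar x k ^ q = ∑ w ∈ range W,
      if k < Nat.card {i | w < m i} then levelGap q w * a k else 0 := by
    rw [hσ, hm, natCast_rpow_eq_sum_levelGap hq (hW _), mul_sum]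
    exact sum_congr rfl fun w _ => by rw [mul_ite, mul_zero, mul_comm]; simp only [lt_iff]
  have level_hasSum (w : ℕ) :
      HasSum (fun k => if k < Nat.card {i | w < m i} then levelGap q w * a k else 0)
        (levelGap q w * ∑ k ∈ range (Nat.card {i | w < m i}), a k) := by
    rw [mul_sum, ← sum_congr rfl fun k hk => if_pos (mem_range.1 hk)]
    exact hasSum_sum_of_ne_finset_zero fun k hk => if_neg (mt mem_range.2 hk)
  simp only [lorentzPow, term_eq]
  exact (hasSum_sum fun w _ => level_hasSum w).tsum_eq

lemma lorentzPow_of_abs_eq_indicator (hq : q ≠ 0) (a : ℕ → ℝ) {x : ℕ →₀ ℝ} {s : Finset ℕ}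
    (hx : ∀ i, |x i| = if i ∈ s then 1 else 0) : lorentzPow q a x = ∑ k ∈ range #s, a k := by
  have hm (i : ℕ) : |x i| = (if i ∈ s then 1 else 0 : ℕ) := by simp [hx]
  rw [lorentzPow_eq_sum_levelGap hq a hm (W := 1) fun i => by split_ifs <;> simp]
  have level_set : {i | 0 < if i ∈ s then 1 else 0} = (s : Set ℕ) := by
    ext i
    by_cases hi : i ∈ s <;> simp [hi]
  simp [levelGap_zero hq, level_set]

end LorentzPow

/-! ### Forward differences -/

lemma fwdDiff_sum_range (a : ℕ → ℝ) : fwdDiff 1 (fun n => ∑ k ∈ range n, a k) = a := by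
  ext n
  simp [fwdDiff, sum_range_succ]

lemma fwdDiff_iter_eq_zero_of_forall_ge {a : ℕ → ℝ} {n : ℕ}
    (h : ∀ m, n ≤ m → (fwdDiff 1)^[m] a 0 = 0) : (fwdDiff 1)^[n] a = 0 := by
  ext k
  have newton := shift_eq_sum_fwdDiff_iter 1 ((fwdDiff 1)^[n] a) k 0
  simp only [← Function.iterate_add_apply, smul_eq_mul, mul_one, zero_add] at newton
  rw [newton, Pi.zero_apply]
  exact sum_eq_zero fun j _ => by rw [h _ (n.le_add_left j), smul_zero]

lemma eq_const_of_tendsto_of_fwdDiff_iter_eq_zero {a : ℕ → ℝ} {l : ℝ}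
    (ha : Tendsto a atTop (𝓝 l)) {n : ℕ} (h : (fwdDiff 1)^[n] a = 0) (k : ℕ) : a k = l := by
  induction n generalizing a l k with
  | zero =>
    obtain rfl : a = 0 := h
    exact tendsto_nhds_unique tendsto_const_nhds ha
  | succ n ih =>
    have diff_tendsto : Tendsto (fwdDiff 1 a) atTop (𝓝 0) := by
      simpa [Function.comp_def, ← fwdDiff.eq_1] using (ha.comp (tendsto_add_atTop_nat 1)).sub ha
    have step (j : ℕ) : a (j + 1) = a j := sub_eq_zero.1 (ih diff_tendsto h j)
    have shift (j : ℕ) : a (j + k) = a k := by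
      induction j with
      | zero => rw [zero_add]
      | succ j hj => rw [add_right_comm, step, hj]
    exact tendsto_nhds_unique (tendsto_const_nhds.congr fun j => (shift j).symm)
      (ha.comp (tendsto_add_atTop_nat k))

-- In each coordinate the total weight of `R` is minus that of `¬ R`, so summing over the values of
-- that coordinate replaces `A` by a multiple of `fwdDiff 1 A`.
lemma sum_prod_mul_card_eq_prod_mul_fwdDiff {β : Type*} [Fintype β] (R : β → Prop)
    [DecidablePred R] {n : ℕ} (κ : Fin n → β → ℝ) (hκ : ∀ i, ∑ b, κ i b = 0) (A : ℕ → ℝ) :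
    ∑ z : Fin n → β, (∏ i, κ i (z i)) * A #{i | R (z i)} =
      (∏ i, ∑ b, if R b then κ i b else 0) * (fwdDiff 1)^[n] A 0 := by
  induction n generalizing A with
  | zero => simp
  | succ n ih =>
    have fiber (b : β) : ∑ z : Fin n → β, (∏ i, κ i (Fin.cons (α := fun _ => β) b z i)) *
          A #{i | R (Fin.cons (α := fun _ => β) b z i)} =
        κ 0 b * ((∏ i : Fin n, ∑ b, if R b then κ i.succ b else 0) *
          if R b then (fwdDiff 1)^[n] (fun k => A (k + 1)) 0 else (fwdDiff 1)^[n] A 0) := by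
      rw [← apply_ite (fun f : ℕ → ℝ => (fwdDiff 1)^[n] f 0), ← ih _ fun i => hκ i.succ, mul_sum]
      refine sum_congr rfl fun z _ => ?_
      rw [Fin.prod_univ_succ, Fin.card_filter_univ_succ]
      by_cases hR : R b <;> simp [hR, mul_assoc, add_comm]
    have diff_succ : (fwdDiff 1)^[n + 1] A 0 =
        (fwdDiff 1)^[n] (fun k => A (k + 1)) 0 - (fwdDiff 1)^[n] A 0 := by
      rw [fwdDiff_iter_comp_add, Function.iterate_succ_apply', fwdDiff]
    have split (b : β) : (κ 0 b * if R b then (fwdDiff 1)^[n] (fun k => A (k + 1)) 0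
          else (fwdDiff 1)^[n] A 0) =
        κ 0 b * (fwdDiff 1)^[n] A 0 + (if R b then κ 0 b else 0) * (fwdDiff 1)^[n + 1] A 0 := by
      rw [diff_succ]
      split_ifs <;> ring
    rw [← (Fin.consEquiv fun _ => β).sum_comp, Fintype.sum_prod_type]
    refine (sum_congr rfl fun b _ => fiber b).trans ?_
    simp only [mul_left_comm (κ 0 _), split, ← mul_sum, sum_add_distrib, ← sum_mul, hκ 0, zero_mul,
      zero_add, Fin.prod_univ_succ]
    ring

/-! ### The Lorentz functional on a grid -/

section Grid

variable {m n : ℕ}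

/-- The vector of `c₀₀` with the integer coordinates `z`, continued by zeros. -/
noncomputable def latticePoint (z : Fin n → ℤ) : ℕ →₀ ℝ :=
  Finsupp.embDomain Fin.valEmbedding (Finsupp.equivFunOnFinite.symm fun i => (z i : ℝ))

lemma latticePoint_apply_val (z : Fin n → ℤ) (i : Fin n) : latticePoint z i = z i := by
  simpa [latticePoint] using Finsupp.embDomain_apply_self Fin.valEmbedding
    (Finsupp.equivFunOnFinite.symm fun i => (z i : ℝ)) i

lemma latticePoint_apply_of_le (z : Fin n → ℤ) {j : ℕ} (hj : n ≤ j) : latticePoint z j = 0 := by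
  refine Finsupp.embDomain_of_notMem_range _ _ _ ?_
  rintro ⟨i, rfl⟩
  exact i.isLt.not_ge hj

lemma latticePoint_sub (y z : Fin n → ℤ) :
    latticePoint y - latticePoint z = latticePoint (y - z) := by
  ext j
  rcases lt_or_ge j n with hj | hj
  · lift j to Fin n using hj
    simp [latticePoint_apply_val]
  · simp [latticePoint_apply_of_le _ hj]

lemma lorentzPow_latticePoint {q : ℝ} (hq : q ≠ 0) (a : ℕ → ℝ) {z : Fin n → ℤ} {W : ℕ}
    (hz : ∀ i, (z i).natAbs ≤ W) :
    lorentzPow q a (latticePoint z) =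
      ∑ w ∈ range W, levelGap q w * ∑ k ∈ range #{i | w < (z i).natAbs}, a k := by
  let m (j : ℕ) : ℕ := if h : j < n then (z ⟨j, h⟩).natAbs else 0
  have abs_eq (j : ℕ) : |latticePoint z j| = m j := by
    rcases lt_or_ge j n with hj | hj
    · simpa [m, hj] using congrArg abs (latticePoint_apply_val z ⟨j, hj⟩)
    · simp [m, hj.not_gt, latticePoint_apply_of_le z hj]
  have m_le (j : ℕ) : m j ≤ W := by
    by_cases hj : j < n <;> simp [m, hj, hz]
  have card_eq (w : ℕ) : Nat.card {j | w < m j} = #{i | w < (z i).natAbs} := by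
    have level_set : {j | w < m j} =
        (({i | w < (z i).natAbs} : Finset (Fin n)).map Fin.valEmbedding : Set ℕ) := by
      ext j
      by_cases hj : j < n <;> simp [m, hj, Fin.exists_iff]
    rw [level_set, Nat.card_coe_set_eq, Set.ncard_coe_finset, card_map]
  simp only [lorentzPow_eq_sum_levelGap hq a abs_eq m_le, card_eq]

/-- The off-band sum of the autocorrelation of a coefficient vector `c` on the grid
`{0, …, m - 1}`: the sum of `c i * c j` over the pairs `(i, j)` with `w < |i - j|`. -/
def farSum (c : Fin m → ℝ) (w : ℕ) : ℝ :=
  ∑ b : Fin m × Fin m, if w < ((b.1 : ℤ) - b.2).natAbs then c b.1 * c b.2 else 0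

lemma sum_prod_mul_card_natAbs_sub (c : Fin n → Fin m → ℝ) (hc : ∀ i, ∑ b, c i b = 0)
    (A : ℕ → ℝ) (w : ℕ) :
    ∑ p : Fin n → Fin m, ∑ r : Fin n → Fin m,
        (∏ i, c i (p i)) * (∏ i, c i (r i)) * A #{i | w < ((p i : ℤ) - r i).natAbs} =
      (∏ i, farSum (c i) w) * (fwdDiff 1)^[n] A 0 := by
  have hcc (i : Fin n) : ∑ b : Fin m × Fin m, c i b.1 * c i b.2 = 0 := by
    rw [Fintype.sum_prod_type, ← sum_mul_sum, hc i, zero_mul]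
  simp only [farSum]
  rw [← sum_prod_mul_card_eq_prod_mul_fwdDiff _ _ hcc,
    ← (Equiv.arrowProdEquivProdArrow (Fin n) (fun _ => Fin m) (fun _ => Fin m)).symm.sum_comp,
    Fintype.sum_prod_type]
  simp only [Equiv.arrowProdEquivProdArrow, Equiv.coe_fn_symm_mk, prod_mul_distrib]
  rfl

lemma sum_prod_mul_lorentzPow_latticePoint_sub {q : ℝ} (hq : q ≠ 0) (a : ℕ → ℝ)
    (c : Fin (n + 1) → Fin (m + 1) → ℝ) (hc : ∀ i, ∑ b, c i b = 0) :
    ∑ p : Fin (n + 1) → Fin (m + 1), ∑ r : Fin (n + 1) → Fin (m + 1),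
        (∏ i, c i (p i)) * (∏ i, c i (r i)) *
          lorentzPow q a (latticePoint (fun i => (p i : ℤ)) - latticePoint (fun i => (r i : ℤ))) =
      (∑ w ∈ range m, levelGap q w * ∏ i, farSum (c i) w) * (fwdDiff 1)^[n] a 0 := by
  have value (p r : Fin (n + 1) → Fin (m + 1)) :
      lorentzPow q a (latticePoint (fun i => (p i : ℤ)) - latticePoint (fun i => (r i : ℤ))) =
        ∑ w ∈ range m, levelGap q w *
          ∑ k ∈ range #{i | w < ((p i : ℤ) - r i).natAbs}, a k := by
    rw [latticePoint_sub, lorentzPow_latticePoint hq a (W := m) fun i => ?_]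
    · rfl
    · simp only [Pi.sub_apply]
      omega
  have level (w : ℕ) := sum_prod_mul_card_natAbs_sub c hc (fun n => ∑ k ∈ range n, a k) w
  simp only [Function.iterate_succ_apply, fwdDiff_sum_range] at level
  simp only [value, mul_sum _ _ (_ * _), mul_left_comm _ (levelGap q _), sum_mul,
    mul_assoc (levelGap q _), ← level, mul_sum _ _ (levelGap q _)]
  simp only [sum_comm (s := range m)]

end Grid

/-! ### Isometries into `L_q` -/

/-- The linear map `T` embeds `c₀₀`, with the Lorentz `q`-norm of weights `a`, isometrically into
`L_q(μ)`. Its values are functions rather than classes, and need not be measurable. -/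
def IsLorentzIsometry {Ω : Type*} [MeasurableSpace Ω] (q : ℝ) (a : ℕ → ℝ) (μ : Measure Ω)
    (T : (ℕ →₀ ℝ) →ₗ[ℝ] (Ω → ℝ)) : Prop :=
  ∀ x, ∫ ω, |T x ω| ^ q ∂μ = lorentzPow q a x

namespace IsLorentzIsometry

variable {Ω : Type*} [MeasurableSpace Ω] {q : ℝ} {a : ℕ → ℝ} {μ : Measure Ω}
  {T : (ℕ →₀ ℝ) →ₗ[ℝ] (Ω → ℝ)}

-- The Bochner integral of a non-integrable function is `0`, but `lorentzPow` is positive off `0`.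
lemma integrable (hT : IsLorentzIsometry q a μ T) (hq : q ≠ 0) (ha0 : 0 < a 0)
    (ha : ∀ k, 0 ≤ a k) (x : ℕ →₀ ℝ) : Integrable (fun ω => |T x ω| ^ q) μ := by
  rcases eq_or_ne x 0 with rfl | hx
  · simp [Real.zero_rpow hq]
  · exact .of_integral_ne_zero (hT x ▸ (lorentzPow_pos hq ha0 ha hx).ne')

lemma apply_zero_le_apply (hT : IsLorentzIsometry q a μ T) (hq : 2 ≤ q) (ha0 : 0 < a 0)
    (ha : ∀ k, 0 ≤ a k) (k : ℕ) : a 0 ≤ a k := by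
  have hq0 : q ≠ 0 := by positivity
  let x : ℕ →₀ ℝ := Finsupp.indicator (range k) fun _ _ => 1
  let y : ℕ →₀ ℝ := Finsupp.single k 1
  have abs_x (i : ℕ) : |x i| = if i ∈ range k then 1 else 0 := by
    by_cases hi : i < k <;> simp [x, hi]
  have abs_y (i : ℕ) : |y i| = if i ∈ ({k} : Finset ℕ) then 1 else 0 := by
    by_cases hi : k = i <;> simp [y, hi, eq_comm]
  have abs_add (i : ℕ) : |(x + y) i| = if i ∈ range (k + 1) then 1 else 0 := by
    rcases lt_trichotomy i k with hi | rfl | hi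
    · simp [x, y, hi, hi.ne', hi.trans k.lt_succ_self]
    · simp [x, y]
    · simp [x, y, hi.ne, hi.not_gt, Nat.not_lt.2 (Nat.succ_le_of_lt hi)]
  have abs_sub (i : ℕ) : |(x - y) i| = if i ∈ range (k + 1) then 1 else 0 := by
    rcases lt_trichotomy i k with hi | rfl | hi
    · simp [x, y, hi, hi.ne', hi.trans k.lt_succ_self]
    · simp [x, y]
    · simp [x, y, hi.ne, hi.not_gt, Nat.not_lt.2 (Nat.succ_le_of_lt hi)]
  have int := hT.integrable hq0 ha0 ha
  have clarkson : 2 * (∫ ω, |T x ω| ^ q ∂μ + ∫ ω, |T y ω| ^ q ∂μ) ≤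
      ∫ ω, |T (x + y) ω| ^ q ∂μ + ∫ ω, |T (x - y) ω| ^ q ∂μ := by
    simpa using clarkson_integral_abs_rpow hq (int x) (int y)
      (by simpa using int (x + y)) (by simpa using int (x - y))
  rw [hT, hT, hT, hT, lorentzPow_of_abs_eq_indicator hq0 a abs_x,
    lorentzPow_of_abs_eq_indicator hq0 a abs_y, lorentzPow_of_abs_eq_indicator hq0 a abs_add,
    lorentzPow_of_abs_eq_indicator hq0 a abs_sub, card_range, card_singleton, card_range,
    sum_range_one, sum_range_succ] at clarkson
  linarith

lemma sum_mul_lorentzPow_sub_nonpos (hT : IsLorentzIsometry q a μ T) (hq : 0 < q) (hq2 : q < 2)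
    (ha0 : 0 < a 0) (ha : ∀ k, 0 ≤ a k) {ι : Type*} [Fintype ι] {c : ι → ℝ} (hc : ∑ i, c i = 0)
    (x : ι → ℕ →₀ ℝ) : ∑ i, ∑ j, c i * c j * lorentzPow q a (x i - x j) ≤ 0 := by
  simp only [← hT _, map_sub, Pi.sub_apply]
  exact sum_mul_integral_abs_sub_rpow_nonpos hq hq2 hc fun i j => by
    simpa using hT.integrable hq.ne' ha0 ha (x i - x j)

lemma sum_levelGap_mul_prod_farSum_mul_fwdDiff_nonpos (hT : IsLorentzIsometry q a μ T)
    (hq : 0 < q) (hq2 : q < 2) (ha0 : 0 < a 0) (ha : ∀ k, 0 ≤ a k) {m n : ℕ}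
    (c : Fin (n + 1) → Fin (m + 1) → ℝ) (hc : ∀ i, ∑ b, c i b = 0) :
    (∑ w ∈ range m, levelGap q w * ∏ i, farSum (c i) w) * (fwdDiff 1)^[n] a 0 ≤ 0 := by
  rw [← sum_prod_mul_lorentzPow_latticePoint_sub hq.ne' a c hc]
  refine hT.sum_mul_lorentzPow_sub_nonpos hq hq2 ha0 ha ?_ _
  rw [← Fintype.piFinset_univ, ← prod_univ_sum]
  simp [hc]

lemma neg_one_pow_mul_fwdDiff_iter_nonneg (hT : IsLorentzIsometry q a μ T)
    (hq : 0 < q) (hq2 : q < 2) (ha0 : 0 < a 0) (ha : ∀ k, 0 ≤ a k) (n : ℕ) :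
    0 ≤ (-1) ^ n * (fwdDiff 1)^[n] a 0 := by
  have far : farSum ![1, -1] 0 = -2 := by
    norm_num [farSum, Fintype.sum_prod_type]
  have test := hT.sum_levelGap_mul_prod_farSum_mul_fwdDiff_nonpos hq hq2 ha0 ha
    (n := n) (fun _ => ![1, -1]) (by simp)
  have quadratic_form : (∑ w ∈ range 1, levelGap q w * ∏ _i : Fin (n + 1), farSum ![1, -1] w) *
      (fwdDiff 1)^[n] a 0 = -(2 ^ (n + 1) * ((-1) ^ n * (fwdDiff 1)^[n] a 0)) := by
    rw [sum_range_one, levelGap_zero hq.ne', prod_const, card_fin, far, neg_pow 2]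
    ring
  rw [quadratic_form, neg_nonpos] at test
  exact nonneg_of_mul_nonneg_right test (by positivity)

-- All but one of the test vectors have their largest off-band sum at the level `w = 1`, where that
-- of the remaining vector is positive; for large `n` this level decides the sign.
lemma eventually_neg_one_pow_mul_fwdDiff_iter_nonpos (hT : IsLorentzIsometry q a μ T)
    (hq : 0 < q) (hq2 : q < 2) (ha0 : 0 < a 0) (ha : ∀ k, 0 ≤ a k) :
    ∀ᶠ n in atTop, (-1) ^ n * (fwdDiff 1)^[n] a 0 ≤ 0 := by
  have far_special : farSum ![1, -2, 1, 0] 0 = -6 ∧ farSum ![1, -2, 1, 0] 1 = 2 ∧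
      farSum ![1, -2, 1, 0] 2 = 0 := by
    refine ⟨?_, ?_, ?_⟩ <;> norm_num [farSum, Fintype.sum_prod_type, Fin.sum_univ_succ]
  have far_main : farSum ![1, 1, -1, -1] 0 = -4 ∧ farSum ![1, 1, -1, -1] 1 = -6 := by
    refine ⟨?_, ?_⟩ <;> norm_num [farSum, Fintype.sum_prod_type, Fin.sum_univ_succ]
  have gap_pos : 0 < levelGap q 1 := by
    simpa [levelGap, one_add_one_eq_two] using Real.one_lt_rpow one_lt_two hq
  have dominated : ∀ᶠ n : ℕ in atTop, 3 / levelGap q 1 < (6 / 4 : ℝ) ^ n :=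
    (tendsto_pow_atTop_atTop_of_one_lt (by norm_num)).eventually_gt_atTop _
  filter_upwards [dominated] with n hn
  have coeff_pos : 0 < 2 * levelGap q 1 * 6 ^ n - 6 * 4 ^ n := by
    rw [div_pow, div_lt_div_iff₀ gap_pos (by positivity)] at hn
    linarith
  have test := hT.sum_levelGap_mul_prod_farSum_mul_fwdDiff_nonpos hq hq2 ha0 ha
    (n := n) (m := 3) (Fin.cons ![1, -2, 1, 0] fun _ => ![1, 1, -1, -1])
    (Fin.cases (by norm_num [Fin.sum_univ_succ]) fun _ => by simp [Fin.sum_univ_four])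
  simp only [sum_range_succ, range_zero, sum_empty, Fin.prod_univ_succ, Fin.cons_zero,
    Fin.cons_succ, prod_const, card_fin, far_special, far_main, levelGap_zero hq.ne',
    neg_pow (6 : ℝ), neg_pow (4 : ℝ)] at test
  refine nonpos_of_mul_nonpos_right (a := 2 * levelGap q 1 * 6 ^ n - 6 * 4 ^ n) ?_ coeff_pos
  linarith

lemma apply_eq_apply_zero (hT : IsLorentzIsometry q a μ T) (hq : 0 < q) (hanti : Antitone a)
    (ha0 : 0 < a 0) (ha : ∀ k, 0 ≤ a k) (k : ℕ) : a k = a 0 := by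
  rcases le_or_gt 2 q with hq2 | hq2
  · exact (hanti k.zero_le).antisymm (hT.apply_zero_le_apply hq2 ha0 ha k)
  obtain ⟨n, hn⟩ := eventually_atTop.1
    (hT.eventually_neg_one_pow_mul_fwdDiff_iter_nonpos hq hq2 ha0 ha)
  have fwdDiff_zero (m : ℕ) (hm : n ≤ m) : (fwdDiff 1)^[m] a 0 = 0 := by
    simpa using (hn m hm).antisymm (hT.neg_one_pow_mul_fwdDiff_iter_nonneg hq hq2 ha0 ha m)
  have const := eq_const_of_tendsto_of_fwdDiff_iter_eq_zero
    (tendsto_atTop_ciInf hanti ⟨0, Set.forall_mem_range.2 ha⟩)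
    (fwdDiff_iter_eq_zero_of_forall_ge fwdDiff_zero)
  rw [const k, const 0]

end IsLorentzIsometry

universe u

lemma exists_isLorentzIsometry_of_const {q : ℝ} (hq : q ≠ 0) {a : ℕ → ℝ} {b : ℝ} (hb : 0 ≤ b)
    (ha : ∀ k, a k = b) :
    ∃ (Ω : Type u) (_ : MeasurableSpace Ω) (μ : Measure Ω) (T : (ℕ →₀ ℝ) →ₗ[ℝ] (Ω → ℝ)),
      IsLorentzIsometry q a μ T := by
  refine ⟨ULift ℕ, ⊤, ENNReal.ofReal b • Measure.count,
    LinearMap.funLeft ℝ ℝ ULift.down ∘ₗ Finsupp.lcoeFun, fun x => ?_⟩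
  have summable : Summable fun i => |x i| ^ q := by
    refine summable_of_ne_finset_zero (s := x.support) fun i hi => ?_
    rw [Finsupp.notMem_support_iff.1 hi, abs_zero, Real.zero_rpow hq]
  let _ : MeasurableSpace (ULift.{u} ℕ) := ⊤
  have integrable : Integrable (fun i : ULift.{u} ℕ => |x i.down| ^ q) Measure.count :=
    integrable_count_iff.2 (Equiv.ulift.summable_iff.2 summable).norm
  rw [lorentzPow_of_const q ha, integral_smul_measure, ENNReal.toReal_ofReal hb, smul_eq_mul,
    ← Equiv.ulift.{u}.tsum_eq fun i => |x i| ^ q]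
  exact congrArg _ ((integral_countable integrable).trans (by simp))

theorem stmt4_general (q : ℝ) (hq : 0 < q) (a : ℕ → ℝ)
    (hnonneg : ∀ k, 0 ≤ a k) (hanti : ∀ k, a (k + 1) ≤ a k) :
    (∃ (Ω : Type u) (_ : MeasurableSpace Ω) (μ : Measure Ω)
        (T : (ℕ →₀ ℝ) →ₗ[ℝ] (Ω → ℝ)),
      ∀ x : ℕ →₀ ℝ,
        (∫ ω, |T x ω| ^ q ∂μ) = ∑' k, a k * seqStar (⇑x) k ^ q) ↔
    (∀ k, a k = a 0) := by
  refine ⟨?_, exists_isLorentzIsometry_of_const hq.ne' (hnonneg 0)⟩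
  rintro ⟨Ω, _, μ, T, hT⟩ k
  have antitone : Antitone a := antitone_nat_of_succ_le hanti
  rcases (hnonneg 0).eq_or_lt' with ha0 | ha0
  · exact (antitone k.zero_le).antisymm (ha0 ▸ hnonneg k)
  · exact IsLorentzIsometry.apply_eq_apply_zero hT hq antitone ha0 hnonneg k

/-- For `0 < q < ∞` and a non-increasing sequence of positive weights `a` with
`∑ a_k = ∞`, the space `c₀₀` of finitely supported sequences with the Lorentz
`q`-norm `‖x‖ = (∑ a_k (x_k^*)^q)^{1/q}` embeds isometrically into `L_q`
iff the weight sequence is constant. -/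
theorem stmt4 (q : ℝ) (hq : 0 < q) (a : ℕ → ℝ)
    (hpos : ∀ k, 0 < a k) (hanti : ∀ k, a (k + 1) ≤ a k)
    (hdiv : ¬ Summable a) :
    (∃ (Ω : Type) (_ : MeasurableSpace Ω) (μ : Measure Ω)
        (T : (ℕ →₀ ℝ) →ₗ[ℝ] (Ω → ℝ)),
      ∀ x : ℕ →₀ ℝ,
        (∫ ω, |T x ω| ^ q ∂μ) = ∑' k, a k * seqStar (⇑x) k ^ q) ↔
    (∀ k, a k = a 0) :=
  stmt4_general q hq a (fun k => (hpos k).le) hanti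
end

section
/- Let n ≥ 2, q ∈ (0,2], and let a_1, …, a_n be nonnegative real numbers. The function x ↦ exp(−(a_1 (x_1^*)^q + … + a_n (x_n^*)^q)) is positive definite on ℝ^n if and only if either (i) 1 < q ≤ 2 and a_1 = a_2 = … = a_n, or (ii) 0 < q ≤ 1 and the numbers a_1, …, a_n form a non-increasing arithmetic progression, i.e., there is d ≥ 0 with a_k − a_{k+1} = d for all 1 ≤ k ≤ n−1. -/
open MeasureTheory

/-- The non-increasing rearrangement of `(|x 0|, …, |x (n-1)|)`. -/
noncomputable def dstar {n : ℕ} (x : Fin n → ℝ) : Fin n → ℝ :=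
  fun i => |x (Tuple.sort (fun j => -|x j|) i)|

/-- `f : ℝⁿ → ℂ` is positive definite: for all points `y¹,…,yᵐ` and scalars
`c₁,…,c_m ∈ ℂ`, the sum `∑ cᵢ conj(cⱼ) f(yⁱ − yʲ)` is real and nonnegative. -/
def IsPosDefFn {n : ℕ} (f : (Fin n → ℝ) → ℂ) : Prop :=
  ∀ (m : ℕ) (y : Fin m → Fin n → ℝ) (c : Fin m → ℂ),
    0 ≤ (∑ i, ∑ j, c i * (starRingEnd ℂ) (c j) * f (y i - y j)).re ∧
      (∑ i, ∑ j, c i * (starRingEnd ℂ) (c j) * f (y i - y j)).im = 0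

/-!
Write `N x = ∑ a_k (x_k^*) ^ q`. As `N` is homogeneous, positive definiteness of `exp (-N)` is
the same as that of `exp (-t N)` for all `t ≥ 0`, hence (Schoenberg) the same as `N` being of
negative type: `∑ c_i c_j N (y_i - y_j) ≤ 0` whenever `∑ c_i = 0`.

Sufficiency. Powers with exponent in `(0, 1]` preserve negative type, so `|x| ^ q` is of negative
type for `q ≤ 2`. If `a_k = s + (n - k) d`, then
`N x = s ∑ |x_i| ^ q + d ∑_{i < j} max (|x_i|, |x_j|) ^ q`, and
`max (|x|, |y|) = (|x + y| + |x - y|) / 2` is of negative type, hence so are its powers with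
exponent `q ≤ 1`.

Necessity. If `N` is of negative type on `ℝ^(n+1)`, then `y ↦ N (z, y) - N (0, y)` is positive
definite on `ℝ^n`. Its values at widely separated points are all `a_(n+1) z ^ q`, so
`a_(n+1) ≥ 0`. For `z` large it is a constant minus the ordered sum with weights
`a_k - a_(k+1)`, so the differences again give a function of negative type, in one dimension less,
and everything reduces to two facts.

* In dimension `2`: `a_1 ≥ a_2`, with equality if `q > 1`. Up to constants the increment is
  `(a_1 - a_2) (L ^ q - |x| ^ q)₊`, and testing it on `δ_0 - δ_1 + δ_L - δ_(L+1)` gives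
  `L ^ q - (L - 1) ^ q ≤ 2` if `a_1 > a_2`, which is false for large `L`.
* In dimension `3`: `a_1 - a_2 = a_2 - a_3`. The inequality `≥` is the two-dimensional one for the
  differences. If it is strict, the increment contains a positive multiple of
  `(L ^ q - max (|x|, |y|) ^ q)₊`, all the other terms depending on one variable only. Testing on
  the product of `δ_0 - δ_1 + δ_L - δ_(L+1)` with the difference of two distant blocks of `L`
  unit masses gives `L (L ^ q - (L - 1) ^ q) ≤ 2`, which is false for large `L` as the left side
  is at least `min (q, 1) L ^ q`.
-/

open Filter Topology
open scoped Matrix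

/-! ### Positive semidefinite and conditionally negative definite kernels -/

section PosSemidef

variable {X : Type*} {M : Matrix X X ℝ}

lemma dotProduct_mulVec_eq_sum [Fintype X] (M : Matrix X X ℝ) (c : X → ℝ) :
    c ⬝ᵥ M *ᵥ c = ∑ i, ∑ j, c i * c j * M i j := by
  simp only [dotProduct, Matrix.mulVec, Finset.mul_sum]
  exact Finset.sum_congr rfl fun i _ => Finset.sum_congr rfl fun j _ => by ring

lemma posSemidef_map_pow [Finite X] (hM : M.PosSemidef) (k : ℕ) : (M.map (· ^ k)).PosSemidef := by
  induction k with
  | zero =>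
    have hone : M.map (· ^ 0) = Matrix.vecMulVec 1 (star 1) := by
      ext i j
      simp [Matrix.vecMulVec_apply]
    exact hone ▸ Matrix.posSemidef_vecMulVec_self_star 1
  | succ k ih =>
    have hsucc : M.map (· ^ (k + 1)) = M.map (· ^ k) ⊙ M := by
      ext i j
      exact pow_succ (M i j) k
    exact hsucc ▸ ih.hadamard hM

lemma posSemidef_map_exp [Finite X] (hM : M.PosSemidef) : (M.map Real.exp).PosSemidef := by
  cases nonempty_fintype X
  refine .of_dotProduct_mulVec_nonneg (hM.isHermitian.map _ fun _ => rfl) fun c => ?_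
  have hseries : HasSum (fun k : ℕ => (k.factorial : ℝ)⁻¹ • M.map (· ^ k)) (M.map Real.exp) := by
    refine Pi.hasSum.2 fun i => Pi.hasSum.2 fun j => ?_
    simpa [Real.exp_eq_exp_ℝ, div_eq_inv_mul] using NormedSpace.expSeries_div_hasSum_exp (M i j)
  let φ : Matrix X X ℝ →+ ℝ :=
    ⟨⟨fun A => c ⬝ᵥ A *ᵥ c, by simp⟩, fun A B => by simp [Matrix.add_mulVec]⟩
  have hφ : Continuous φ := by
    change Continuous fun A : Matrix X X ℝ => c ⬝ᵥ A *ᵥ c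
    fun_prop
  exact (hseries.map φ hφ).nonneg fun k =>
    ((posSemidef_map_pow hM k).smul (by positivity)).dotProduct_mulVec_nonneg c

lemma dotProduct_mulVec_integral [Fintype X] {α : Type*} [MeasurableSpace α] {μ : Measure α}
    {F : α → Matrix X X ℝ} (hF : ∀ i j, Integrable (fun t => F t i j) μ) (c : X → ℝ) :
    c ⬝ᵥ (Matrix.of fun i j => ∫ t, F t i j ∂μ) *ᵥ c = ∫ t, c ⬝ᵥ F t *ᵥ c ∂μ := by
  have hint : ∀ i j, Integrable (fun t => c i * (F t i j * c j)) μ := fun i j =>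
    ((hF i j).mul_const _).const_mul _
  simp only [dotProduct, Matrix.mulVec, Matrix.of_apply, Finset.mul_sum]
  rw [integral_finsetSum _ fun i _ => integrable_finsetSum _ fun j _ => hint i j]
  refine Finset.sum_congr rfl fun i _ => ?_
  rw [integral_finsetSum _ fun j _ => hint i j]
  simp only [integral_const_mul, integral_mul_const]

lemma posSemidef_integral [Finite X] {α : Type*} [MeasurableSpace α] {μ : Measure α}
    {F : α → Matrix X X ℝ} (hF : ∀ i j, Integrable (fun t => F t i j) μ)
    (h : ∀ᵐ t ∂μ, (F t).PosSemidef) : (Matrix.of fun i j => ∫ t, F t i j ∂μ).PosSemidef := by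
  cases nonempty_fintype X
  refine .of_dotProduct_mulVec_nonneg (.ext fun i j => ?_) fun c => ?_
  · exact integral_congr_ae (h.mono fun t ht => ht.isHermitian.apply i j)
  · rw [star_trivial, dotProduct_mulVec_integral hF]
    exact integral_nonneg_of_ae (h.mono fun t ht => ht.dotProduct_mulVec_nonneg c)

end PosSemidef

section CondNegDef

variable {X Y : Type*} [Fintype X] {K L M : Matrix X X ℝ}

/-- A real symmetric kernel on a finite set is conditionally negative definite (of negative type)
if its quadratic form is nonpositive on the hyperplane of vectors of coordinate sum zero. -/
structure CondNegDef (K : Matrix X X ℝ) : Prop where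
  isHermitian : K.IsHermitian
  dotProduct_mulVec_nonpos : ∀ c : X → ℝ, ∑ i, c i = 0 → c ⬝ᵥ K *ᵥ c ≤ 0

lemma condNegDef_add_sub (α : X → ℝ) (hM : M.PosSemidef) :
    CondNegDef (Matrix.of fun i j => α i + α j - M i j) where
  isHermitian := Matrix.IsHermitian.ext fun i j => by
    simp only [Matrix.of_apply, star_trivial, ← hM.isHermitian.apply i j, add_comm (α i)]
  dotProduct_mulVec_nonpos c hc := by
    have key : c ⬝ᵥ (Matrix.of fun i j => α i + α j - M i j) *ᵥ c =
        2 * ((∑ i, c i) * ∑ i, c i * α i) - c ⬝ᵥ M *ᵥ c := by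
      simp only [dotProduct_mulVec_eq_sum, Matrix.of_apply, two_mul]
      nth_rw 1 [mul_comm (∑ i, c i)]
      simp only [Finset.sum_mul_sum, ← Finset.sum_add_distrib, ← Finset.sum_sub_distrib]
      exact Finset.sum_congr rfl fun i _ => Finset.sum_congr rfl fun j _ => by ring
    rw [key, hc, zero_mul, mul_zero, zero_sub]
    exact neg_nonpos.2 (hM.dotProduct_mulVec_nonneg c)

namespace CondNegDef

lemma smul (hK : CondNegDef K) {t : ℝ} (ht : 0 ≤ t) : CondNegDef (t • K) where
  isHermitian := hK.isHermitian.smul (.all t)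
  dotProduct_mulVec_nonpos c hc := by
    rw [Matrix.smul_mulVec, dotProduct_smul]
    exact smul_nonpos_of_nonneg_of_nonpos ht (hK.dotProduct_mulVec_nonpos c hc)

lemma add (hK : CondNegDef K) (hL : CondNegDef L) : CondNegDef (K + L) where
  isHermitian := hK.isHermitian.add hL.isHermitian
  dotProduct_mulVec_nonpos c hc := by
    rw [Matrix.add_mulVec, dotProduct_add]
    exact add_nonpos (hK.dotProduct_mulVec_nonpos c hc) (hL.dotProduct_mulVec_nonpos c hc)

lemma zero : CondNegDef (0 : Matrix X X ℝ) where
  isHermitian := Matrix.isHermitian_zero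
  dotProduct_mulVec_nonpos c _ := by rw [Matrix.zero_mulVec, dotProduct_zero]

lemma sum {κ : Type*} (s : Finset κ) {K : κ → Matrix X X ℝ} (hK : ∀ k ∈ s, CondNegDef (K k)) :
    CondNegDef (∑ k ∈ s, K k) :=
  Finset.sum_induction K CondNegDef (fun _ _ => add) zero hK

lemma of_tendsto {α : Type*} {l : Filter α} [l.NeBot] {F : α → Matrix X X ℝ}
    (h : Tendsto F l (𝓝 K)) (hF : ∀ᶠ t in l, CondNegDef (F t)) : CondNegDef K where
  isHermitian := tendsto_nhds_unique ((continuous_id.matrix_conjTranspose.tendsto K).comp h)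
    (h.congr' (hF.mono fun _ ht => ht.isHermitian.eq.symm))
  dotProduct_mulVec_nonpos c hc := by
    have hcont : Continuous fun K : Matrix X X ℝ => c ⬝ᵥ K *ᵥ c := by fun_prop
    exact le_of_tendsto ((hcont.tendsto K).comp h)
      (hF.mono fun _ ht => ht.dotProduct_mulVec_nonpos c hc)

lemma neg_conjTranspose_mul_mul [Finite Y] (hK : CondNegDef K) {B : Matrix X Y ℝ}
    (hB : ∀ j, ∑ i, B i j = 0) : (-(Bᴴ * K * B)).PosSemidef := by
  cases nonempty_fintype Y
  refine .of_dotProduct_mulVec_nonneg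
    (Matrix.isHermitian_conjTranspose_mul_mul B hK.isHermitian).neg fun c => ?_
  have hsum : ∑ i, (B *ᵥ c) i = 0 := by
    simp only [Matrix.mulVec, dotProduct]
    rw [Finset.sum_comm]
    simp only [← Finset.sum_mul, hB, zero_mul, Finset.sum_const_zero]
  have key : star c ⬝ᵥ (-(Bᴴ * K * B)) *ᵥ c = -((B *ᵥ c) ⬝ᵥ K *ᵥ (B *ᵥ c)) := by
    rw [Matrix.neg_mulVec, dotProduct_neg, ← Matrix.mulVec_mulVec, ← Matrix.mulVec_mulVec,
      Matrix.dotProduct_mulVec, ← Matrix.star_mulVec, star_trivial]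
  rw [key]
  exact neg_nonneg.2 (hK.dotProduct_mulVec_nonpos _ hsum)

lemma posSemidef_centered (hK : CondNegDef K) (o : X) :
    (Matrix.of fun i j => K i o + K o j - K i j - K o o).PosSemidef := by
  classical
  let B : Matrix X X ℝ := Matrix.of fun i j => (if i = j then 1 else 0) - if i = o then 1 else 0
  have hB : ∀ j, ∑ i, B i j = 0 := fun j => by simp [B]
  convert hK.neg_conjTranspose_mul_mul hB using 1
  ext i j
  simp only [B, Matrix.of_apply, Matrix.neg_apply, Matrix.mul_apply, Matrix.conjTranspose_apply,
    star_trivial, sub_mul, mul_sub, ite_mul, mul_ite, one_mul, mul_one, zero_mul, mul_zero,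
    Finset.sum_sub_distrib, Finset.sum_ite_eq', Finset.mem_univ, if_true]
  ring

end CondNegDef

lemma CondNegDef.posSemidef_exp_neg (hK : CondNegDef K) :
    ((-K).map Real.exp).PosSemidef := by
  rcases isEmpty_or_nonempty X with hX | ⟨⟨o⟩⟩
  · exact Subsingleton.elim 0 ((-K).map Real.exp) ▸ .zero
  let u : X → ℝ := fun i => Real.exp (-K i o + K o o / 2)
  have hfactor : (-K).map Real.exp = Matrix.vecMulVec u (star u) ⊙
      (Matrix.of fun i j => K i o + K o j - K i j - K o o).map Real.exp := by
    ext i j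
    have hsymm : K o j = K j o := hK.isHermitian.apply j o
    simp only [u, Matrix.map_apply, Matrix.neg_apply, Matrix.hadamard_apply, Matrix.of_apply,
      Matrix.vecMulVec_apply, star_trivial, ← Real.exp_add, hsymm]
    ring_nf
  exact hfactor ▸ (Matrix.posSemidef_vecMulVec_self_star u).hadamard
    (posSemidef_map_exp (hK.posSemidef_centered o))

/-- `K` is the limit of the kernels `(1 - exp (-t K)) / t` as `t` decreases to `0`. -/
lemma condNegDef_of_posSemidef_exp_neg
    (h : ∀ t : ℝ, 0 ≤ t → ((-(t • K)).map Real.exp).PosSemidef) : CondNegDef K := by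
  let F : ℝ → Matrix X X ℝ := fun t =>
    t⁻¹ • Matrix.of fun i j => 1 / 2 + 1 / 2 - (-(t • K)).map Real.exp i j
  have hF : Tendsto F (𝓝[>] 0) (𝓝 K) := by
    refine tendsto_pi_nhds.2 fun i => tendsto_pi_nhds.2 fun j => ?_
    have hderiv : HasDerivAt (fun t : ℝ => 1 - Real.exp (-(t * K i j))) (K i j) 0 := by
      simpa using ((hasDerivAt_mul_const (K i j) (x := 0)).neg.exp).const_sub 1
    simpa [F, -one_div, add_halves] using hderiv.tendsto_slope_zero_right
  exact .of_tendsto hF (eventually_nhdsWithin_of_forall fun t (ht : 0 < t) =>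
    (condNegDef_add_sub (fun _ => 1 / 2) (h t ht.le)).smul (inv_nonneg.2 ht.le))

namespace CondNegDef

lemma integral {α : Type*} [MeasurableSpace α] {μ : Measure α}
    {F : α → Matrix X X ℝ} (hF : ∀ i j, Integrable (fun t => F t i j) μ)
    (h : ∀ᵐ t ∂μ, CondNegDef (F t)) : CondNegDef (Matrix.of fun i j => ∫ t, F t i j ∂μ) where
  isHermitian := .ext fun i j => integral_congr_ae (h.mono fun t ht => ht.isHermitian.apply i j)
  dotProduct_mulVec_nonpos c hc := by
    rw [dotProduct_mulVec_integral hF]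
    exact integral_nonpos_of_ae (h.mono fun t ht => ht.dotProduct_mulVec_nonpos c hc)

/-- `1 / (t + x)` is the Laplace transform of `s ↦ exp (-s x)` with respect to the positive
measure `exp (-s t) ds`. -/
lemma posSemidef_inv_add (hK : CondNegDef K) (hK0 : ∀ i j, 0 ≤ K i j) {t : ℝ} (ht : 0 < t) :
    (Matrix.of fun i j => (t + K i j)⁻¹).PosSemidef := by
  have hneg : ∀ i j, -(t + K i j) < 0 := fun i j => by linarith [hK0 i j]
  have hlaplace : ∀ i j, (t + K i j)⁻¹ = ∫ s in Set.Ioi (0 : ℝ), Real.exp (-(t + K i j) * s) := by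
    intro i j
    rw [integral_exp_mul_Ioi (hneg i j) 0, mul_zero, Real.exp_zero, neg_div_neg_eq, one_div]
  simp only [hlaplace]
  refine posSemidef_integral (F := fun s => Matrix.of fun i j => Real.exp (-(t + K i j) * s))
    (fun i j => integrableOn_exp_mul_Ioi (hneg i j) 0) ?_
  refine (ae_restrict_iff' measurableSet_Ioi).2 (.of_forall fun s (hs : 0 < s) => ?_)
  convert (hK.smul hs.le).posSemidef_exp_neg.smul (Real.exp_pos (-t * s)).le using 1
  ext i j
  simp only [Matrix.of_apply, Matrix.smul_apply, Matrix.map_apply, Matrix.neg_apply, smul_eq_mul,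
    ← Real.exp_add]
  ring_nf

/-- `x ^ p` is a positive mixture over `t > 0` of the functions `1 / t - 1 / (t + x)`. -/
lemma map_rpow (hK : CondNegDef K) (hK0 : ∀ i j, 0 ≤ K i j) {p : ℝ} (hp0 : 0 < p) (hp1 : p ≤ 1) :
    CondNegDef (K.map (· ^ p)) := by
  rcases hp1.eq_or_lt with rfl | hp1
  · simpa using hK
  have hp : p ∈ Set.Ioo (0 : ℝ) 1 := ⟨hp0, hp1⟩
  have hmix : K.map (· ^ p) = (∫ t in Set.Ioi (0 : ℝ), Real.rpowIntegrand₀₁ p t 1)⁻¹ •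
      Matrix.of fun i j => ∫ t in Set.Ioi (0 : ℝ), Real.rpowIntegrand₀₁ p t (K i j) := by
    ext i j
    exact Real.rpow_eq_const_mul_integral hp (hK0 i j)
  rw [hmix]
  refine smul (integral (F := fun t => Matrix.of fun i j => Real.rpowIntegrand₀₁ p t (K i j))
    (fun i j => Real.integrableOn_rpowIntegrand₀₁_Ioi hp (hK0 i j)) ?_)
    (inv_nonneg.2 (Real.integral_rpowIntegrand₀₁_one_pos hp).le)
  refine (ae_restrict_iff' measurableSet_Ioi).2 (.of_forall fun t (ht : 0 < t) => ?_)
  convert (condNegDef_add_sub (fun _ => t⁻¹ / 2) (hK.posSemidef_inv_add hK0 ht)).smul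
    (Real.rpow_nonneg ht.le p) using 1
  ext i j
  simp only [Real.rpowIntegrand₀₁, Matrix.of_apply, Matrix.smul_apply, smul_eq_mul, add_halves]

end CondNegDef

section Norm

variable {E : Type*} [NormedAddCommGroup E] [InnerProductSpace ℝ E]

lemma condNegDef_norm_sub_sq (u : X → E) :
    CondNegDef (Matrix.of fun i j => ‖u i - u j‖ ^ 2) := by
  convert condNegDef_add_sub (fun i => ‖u i‖ ^ 2)
    ((Matrix.posSemidef_gram ℝ u).smul (zero_le_two (α := ℝ))) using 1
  ext i j
  simp only [norm_sub_sq_real, Matrix.of_apply, Matrix.smul_apply, Matrix.gram_apply, smul_eq_mul]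
  ring

lemma condNegDef_norm_sub_rpow (u : X → E) {q : ℝ} (hq0 : 0 < q) (hq2 : q ≤ 2) :
    CondNegDef (Matrix.of fun i j => ‖u i - u j‖ ^ q) := by
  convert (condNegDef_norm_sub_sq u).map_rpow (fun _ _ => sq_nonneg _) (half_pos hq0)
    (by linarith : q / 2 ≤ 1) using 1
  ext i j
  simp only [Matrix.of_apply, Matrix.map_apply]
  rw [← Real.rpow_natCast_mul (norm_nonneg _), Nat.cast_ofNat, mul_div_cancel₀ _ two_ne_zero]

end Norm

lemma max_abs_abs_eq (x y : ℝ) : max |x| |y| = 2⁻¹ * (|x + y| + |x - y|) := by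
  rcases abs_cases x with hx | hx <;> rcases abs_cases y with hy | hy <;>
    rcases abs_cases (x + y) with hadd | hadd <;> rcases abs_cases (x - y) with hsub | hsub <;>
    rcases max_cases |x| |y| with hmax | hmax <;> linarith

lemma condNegDef_max_abs_sub_rpow (u v : X → ℝ) {q : ℝ} (hq0 : 0 < q) (hq1 : q ≤ 1) :
    CondNegDef (Matrix.of fun i j => max |u i - u j| |v i - v j| ^ q) := by
  have habs (w : X → ℝ) : CondNegDef (Matrix.of fun i j => |w i - w j|) := by
    simpa only [Real.rpow_one, Real.norm_eq_abs] using
      condNegDef_norm_sub_rpow w zero_lt_one one_le_two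
  have hmax := (((habs (u + v)).add (habs (u - v))).smul (inv_nonneg.2 zero_le_two)).map_rpow
    (fun i j => mul_nonneg (by norm_num) (add_nonneg (abs_nonneg _) (abs_nonneg _))) hq0 hq1
  convert hmax using 1
  ext i j
  simp only [Matrix.of_apply, Matrix.map_apply, Matrix.smul_apply, Matrix.add_apply, smul_eq_mul,
    Pi.add_apply, Pi.sub_apply, max_abs_abs_eq]
  ring_nf

end CondNegDef

/-! ### Functions of positive and of negative type -/

section TypeFunctions

variable {G H : Type*} [AddCommGroup G] [AddCommGroup H] {f N : G → ℝ}

/-- A real function `f` on an abelian group is of positive type if all the kernels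
`f (u i - u j)` are positive semidefinite. The points `u i` are indexed by a type, so that they
may be repeated. -/
def IsPosType (f : G → ℝ) : Prop :=
  ∀ (ι : Type) [Fintype ι] (u : ι → G), (Matrix.of fun i j => f (u i - u j)).PosSemidef

/-- A real function `N` on an abelian group is of negative type if all the kernels
`N (u i - u j)` are conditionally negative definite. -/
def IsNegType (N : G → ℝ) : Prop :=
  ∀ (ι : Type) [Fintype ι] (u : ι → G), CondNegDef (Matrix.of fun i j => N (u i - u j))

lemma sum_mul_conj_mul_eq {X : Type*} [Fintype X] {M : Matrix X X ℝ} (hM : M.IsHermitian)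
    (c : X → ℂ) : ∑ i, ∑ j, c i * (starRingEnd ℂ) (c j) * M i j =
      (((fun i => (c i).re) ⬝ᵥ M *ᵥ fun i => (c i).re) +
        (fun i => (c i).im) ⬝ᵥ M *ᵥ fun i => (c i).im : ℝ) := by
  simp only [dotProduct_mulVec_eq_sum]
  apply Complex.ext
  · simp only [Complex.re_sum, Complex.mul_re, Complex.conj_re, Complex.conj_im,
      Complex.ofReal_re, Complex.ofReal_im, ← Finset.sum_add_distrib]
    exact Finset.sum_congr rfl fun i _ => Finset.sum_congr rfl fun j _ => by ring
  · simp only [Complex.im_sum, Complex.mul_im, Complex.conj_re, Complex.conj_im,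
      Complex.ofReal_re, Complex.ofReal_im, mul_zero, zero_add, add_mul, Finset.sum_add_distrib]
    nth_rw 1 [Finset.sum_comm]
    rw [← Finset.sum_add_distrib]
    refine Finset.sum_eq_zero fun i _ => ?_
    rw [← Finset.sum_add_distrib]
    refine Finset.sum_eq_zero fun j _ => ?_
    rw [show M j i = M i j from hM.apply i j]
    ring

lemma IsPosDefFn.apply_neg {n : ℕ} {f : (Fin n → ℝ) → ℝ} (h : IsPosDefFn fun x => (f x : ℂ))
    (x : Fin n → ℝ) : f (-x) = f x := by
  have him : -f x + f (-x) = 0 := by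
    simpa [Fin.sum_univ_two] using (h 2 ![x, 0] ![1, Complex.I]).2
  linarith

lemma isPosDefFn_ofReal_iff {n : ℕ} {f : (Fin n → ℝ) → ℝ} :
    IsPosDefFn (fun x => (f x : ℂ)) ↔ IsPosType f := by
  refine ⟨fun h ι _ u => ?_, fun h m u c => ?_⟩
  · have hsymm : (Matrix.of fun i j => f (u i - u j)).IsHermitian := .ext fun i j => by
      simp only [Matrix.of_apply, star_trivial, ← h.apply_neg (u i - u j), neg_sub]
    refine .of_dotProduct_mulVec_nonneg hsymm fun c => ?_
    let e := Fintype.equivFin ι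
    have h1 := (h (Fintype.card ι) (u ∘ e.symm) fun k => (c (e.symm k) : ℂ)).1
    simp only [Function.comp_apply] at h1
    rw [e.symm.sum_comp fun i => ∑ k, (c i : ℂ) * (starRingEnd ℂ) (c (e.symm k)) *
      f (u i - u (e.symm k))] at h1
    simp only [fun i => e.symm.sum_comp fun j => (c i : ℂ) * (starRingEnd ℂ) (c j) *
      f (u i - u j)] at h1
    have h2 := sum_mul_conj_mul_eq hsymm fun i => (c i : ℂ)
    simp only [Matrix.of_apply] at h2
    rw [h2] at h1
    simpa [dotProduct_mulVec_eq_sum] using h1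
  · have hM := h (Fin m) u
    have h2 := sum_mul_conj_mul_eq hM.isHermitian c
    simp only [Matrix.of_apply] at h2
    rw [h2]
    exact ⟨add_nonneg (hM.dotProduct_mulVec_nonneg _) (hM.dotProduct_mulVec_nonneg _), rfl⟩

namespace IsPosType

lemma congr {f' : G → ℝ} (hf : IsPosType f) (h : ∀ x, f x = f' x) : IsPosType f' :=
  funext h ▸ hf

lemma comp (hf : IsPosType f) (φ : H →+ G) : IsPosType fun x => f (φ x) := fun ι _ u => by
  simpa only [map_sub] using hf ι fun i => φ (u i)

lemma apply_zero_nonneg (hf : IsPosType f) : 0 ≤ f 0 := by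
  simpa using (hf Unit fun _ => 0).diag_nonneg (i := ())

lemma apply_neg (hf : IsPosType f) (x : G) : f (-x) = f x := by
  simpa using (hf Bool fun i => cond i x 0).isHermitian.apply true false

end IsPosType

namespace IsNegType

lemma comp (hN : IsNegType N) (φ : H →+ G) : IsNegType fun x => N (φ x) := fun ι _ u => by
  simpa only [map_sub] using hN ι fun i => φ (u i)

end IsNegType

lemma isPosType_exp_neg_iff_isNegType [Module ℝ G] {q : ℝ} (hq : 0 < q)
    (hN : ∀ (t : ℝ) (x : G), 0 ≤ t → N (t • x) = t ^ q * N x) :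
    IsPosType (fun x => Real.exp (-N x)) ↔ IsNegType N := by
  refine ⟨fun h ι _ u => condNegDef_of_posSemidef_exp_neg fun t ht => ?_,
    fun h ι _ u => (h ι u).posSemidef_exp_neg⟩
  have hscale : ∀ x, N (t ^ q⁻¹ • x) = t * N x := fun x => by
    rw [hN _ _ (Real.rpow_nonneg ht _), Real.rpow_inv_rpow ht hq.ne']
  have h1 := h ι fun i => t ^ q⁻¹ • u i
  simp only [← smul_sub, hscale] at h1
  exact h1

/-- The convolution of `f` with `μ * μ̌`, where `μ = ∑ i, c i • δ (u i)` and `μ̌` is the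
reflection of `μ`. -/
def autoConv {κ : Type} [Fintype κ] (c : κ → ℝ) (u : κ → G) (f : G → ℝ) (x : G) : ℝ :=
  ∑ i, ∑ j, c i * c j * f (x + (u i - u j))

section AutoConv

variable {κ : Type} [Fintype κ] (c : κ → ℝ) (u : κ → G)

/-- The kernel of `autoConv c u f` at the points `v` is `Bᴴ * K * B`, where `K` is the kernel
of `f` at the points `u i + v s` and column `t` of `B` puts the weights `c i` at the points with
`s = t`. -/
lemma exists_kernel_autoConv_eq {ι : Type} [Fintype ι] (v : ι → G) :
    ∃ B : Matrix (κ × ι) ι ℝ, (∀ t, ∑ p, B p t = ∑ i, c i) ∧ ∀ f : G → ℝ,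
      (Matrix.of fun s t => autoConv c u f (v s - v t)) =
        Bᴴ * (Matrix.of fun p r : κ × ι => f (u p.1 + v p.2 - (u r.1 + v r.2))) * B := by
  classical
  refine ⟨Matrix.of fun p t => if p.2 = t then c p.1 else 0, fun t => ?_, fun f => ?_⟩
  · simp [Fintype.sum_prod_type]
  · ext s t
    simp only [autoConv, Matrix.of_apply, Matrix.mul_apply, Matrix.conjTranspose_apply,
      star_trivial, Fintype.sum_prod_type, ite_mul, mul_ite, zero_mul, mul_zero,
      Finset.sum_ite_eq', Finset.mem_univ, if_true, Finset.sum_mul]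
    rw [Finset.sum_comm]
    refine Finset.sum_congr rfl fun j _ => Finset.sum_congr rfl fun i _ => ?_
    rw [show v s - v t + (u i - u j) = u i + v s - (u j + v t) by abel]
    ring

variable {c u}

lemma IsPosType.autoConv (hf : IsPosType f) : IsPosType (autoConv c u f) := fun ι _ v => by
  obtain ⟨B, -, hB⟩ := exists_kernel_autoConv_eq c u v
  rw [hB]
  exact (hf (κ × ι) fun p => u p.1 + v p.2).conjTranspose_mul_mul_same B

lemma IsNegType.neg_autoConv (hN : IsNegType N) (hc : ∑ i, c i = 0) :
    IsPosType fun x => -_root_.autoConv c u N x := fun ι _ v => by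
  obtain ⟨B, hBsum, hB⟩ := exists_kernel_autoConv_eq c u v
  have hconj := (hN (κ × ι) fun p => u p.1 + v p.2).neg_conjTranspose_mul_mul
    (B := B) fun t => by rw [hBsum, hc]
  rwa [← hB] at hconj

end AutoConv

end TypeFunctions

/-! ### Decreasing rearrangements and ordered sums -/

section Rearrangement

variable {n : ℕ}

lemma dstar_antitone (x : Fin n → ℝ) : Antitone (dstar x) := fun _ _ hij =>
  neg_le_neg_iff.1 (Tuple.monotone_sort (fun j => -|x j|) hij)

lemma exists_perm_dstar (x : Fin n → ℝ) :
    ∃ σ : Equiv.Perm (Fin n), ∀ i, dstar x i = |x (σ i)| :=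
  ⟨_, fun _ => rfl⟩

lemma dstar_nonneg (x : Fin n → ℝ) (i : Fin n) : 0 ≤ dstar x i := abs_nonneg _

lemma dstar_eq_of_antitone {x y : Fin n → ℝ} (hy : Antitone y) {σ : Fin n → Fin n}
    (hσ : Function.Injective σ) (h : ∀ i, y i = |x (σ i)|) : dstar x = y := by
  let τ : Equiv.Perm (Fin n) := .ofBijective σ (Finite.injective_iff_bijective.1 hσ)
  have hτ : y = (fun j => |x j|) ∘ τ := funext h
  rw [hτ] at hy ⊢
  exact (Tuple.unique_antitone hy (dstar_antitone x)).symm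

lemma dstar_congr_abs {x y : Fin n → ℝ} (h : ∀ i, |x i| = |y i|) : dstar x = dstar y := by
  obtain ⟨σ, hσ⟩ := exists_perm_dstar y
  exact dstar_eq_of_antitone (dstar_antitone y) σ.injective fun i => by rw [hσ, h]

lemma dstar_smul (x : Fin n → ℝ) {t : ℝ} (ht : 0 ≤ t) : dstar (t • x) = t • dstar x := by
  obtain ⟨σ, hσ⟩ := exists_perm_dstar x
  refine dstar_eq_of_antitone ((dstar_antitone x).const_mul ht) σ.injective fun i => ?_
  simp [hσ, abs_mul, abs_of_nonneg ht]

lemma dstar_cons_of_abs_le {x : Fin n → ℝ} {z : ℝ} (hz0 : 0 ≤ z) (hz : ∀ i, |x i| ≤ z) :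
    dstar (Fin.cons z x : Fin (n + 1) → ℝ) = Fin.cons z (dstar x) := by
  obtain ⟨σ, hσ⟩ := exists_perm_dstar x
  refine dstar_eq_of_antitone (σ := Fin.cons 0 fun i => (σ i).succ) ?_ ?_ ?_
  · intro i j hij
    cases j using Fin.cases with
    | zero => rw [Fin.le_zero_iff.1 hij]
    | succ j =>
      cases i using Fin.cases with
      | zero => simpa [hσ] using hz _
      | succ i => simpa using dstar_antitone x (Fin.succ_le_succ_iff.1 hij)
  · exact Fin.cons_injective_iff.2 ⟨fun ⟨i, hi⟩ => Fin.succ_ne_zero _ hi,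
      (Fin.succ_injective n).comp σ.injective⟩
  · intro i
    cases i using Fin.cases <;> simp [hσ, abs_of_nonneg hz0]

lemma dstar_cons_of_le_abs {x : Fin n → ℝ} {z : ℝ} (hz : ∀ i, |z| ≤ |x i|) :
    dstar (Fin.cons z x : Fin (n + 1) → ℝ) = Fin.snoc (dstar x) |z| := by
  obtain ⟨σ, hσ⟩ := exists_perm_dstar x
  refine dstar_eq_of_antitone
    (σ := Fin.snoc (α := fun _ => Fin (n + 1)) (fun i => (σ i).succ) 0) ?_ ?_ ?_
  · intro i j hij
    cases i using Fin.lastCases with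
    | last => rw [Fin.last_le_iff.1 hij]
    | cast i =>
      cases j using Fin.lastCases with
      | last => simpa [hσ] using hz _
      | cast j => simpa using dstar_antitone x (Fin.castSucc_le_castSucc_iff.1 hij)
  · exact Fin.snoc_injective_iff.2 ⟨(Fin.succ_injective n).comp σ.injective,
      fun ⟨i, hi⟩ => Fin.succ_ne_zero _ hi⟩
  · intro i
    cases i using Fin.lastCases <;> simp [hσ]

lemma dstar_zero_eq_of_isGreatest {x : Fin (n + 1) → ℝ} {M : ℝ}
    (hM : IsGreatest (Set.range fun i => |x i|) M) : dstar x 0 = M := by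
  obtain ⟨σ, hσ⟩ := exists_perm_dstar x
  obtain ⟨⟨i, rfl⟩, hmax⟩ := hM
  refine le_antisymm (hσ 0 ▸ hmax ⟨σ 0, rfl⟩) ?_
  simpa [hσ] using dstar_antitone x (Fin.zero_le (σ.symm i))

lemma sum_dstar (x : Fin n → ℝ) (f : ℝ → ℝ) : ∑ i, f (dstar x i) = ∑ i, f |x i| := by
  obtain ⟨σ, hσ⟩ := exists_perm_dstar x
  simp only [hσ]
  exact Equiv.sum_comp σ fun i => f |x i|

lemma sum_sum_dstar (x : Fin n → ℝ) (f : ℝ → ℝ → ℝ) :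
    ∑ i, ∑ j, f (dstar x i) (dstar x j) = ∑ i, ∑ j, f |x i| |x j| := by
  simp only [fun i => sum_dstar x (f (dstar x i)), sum_dstar x fun s => ∑ j, f s |x j|]

/-- In a non-increasing tuple of length `n`, the entry with index `i` (counted from `0`) is the
maximum of exactly `2 (n - 1 - i) + 1` ordered pairs of entries. -/
lemma sum_sum_max_of_antitone {n : ℕ} {s : Fin n → ℝ} (hs : Antitone s) (f : ℝ → ℝ) :
    ∑ i, ∑ j, f (max (s i) (s j)) = ∑ i : Fin n, (2 * ((n : ℝ) - 1 - i) + 1) * f (s i) := by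
  induction n with
  | zero => simp
  | succ n ih =>
    have h0 : ∀ j : Fin n, s j.succ ≤ s 0 := fun j => hs (Fin.zero_le _)
    have hweight : ∀ i : Fin n, 2 * (((n + 1 : ℕ) : ℝ) - 1 - (i.succ : Fin (n + 1))) + 1 =
        2 * ((n : ℝ) - 1 - i) + 1 := fun i => by
      rw [Fin.val_succ]
      push_cast
      ring
    have htail := ih (s := fun i => s i.succ) fun i j hij => hs (Fin.succ_le_succ_iff.2 hij)
    simp only [Fin.sum_univ_succ, Finset.sum_add_distrib, max_self, max_eq_left (h0 _),
      max_eq_right (h0 _), htail, Finset.sum_const, Finset.card_univ, Fintype.card_fin,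
      nsmul_eq_mul, hweight, Fin.val_zero]
    push_cast
    ring

/-- The sum `∑ a_k g(x_k^*)`, with the weights numbered from `1`. -/
noncomputable def orderedSum (a : ℕ → ℝ) (g : ℝ → ℝ) (x : Fin n → ℝ) : ℝ :=
  ∑ i : Fin n, a (i.1 + 1) * g (dstar x i)

variable {a : ℕ → ℝ} {g : ℝ → ℝ}

lemma orderedSum_congr_abs {x y : Fin n → ℝ} (h : ∀ i, |x i| = |y i|) :
    orderedSum a g x = orderedSum a g y := by
  rw [orderedSum, orderedSum, dstar_congr_abs h]

lemma orderedSum_cons_of_le_abs {x : Fin n → ℝ} {z : ℝ} (hz : ∀ i, |z| ≤ |x i|) :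
    orderedSum a g (Fin.cons z x : Fin (n + 1) → ℝ) =
      orderedSum a g x + a (n + 1) * g |z| := by
  simp [orderedSum, dstar_cons_of_le_abs hz, Fin.sum_univ_castSucc]

lemma orderedSum_cons_zero (hg : g 0 = 0) (x : Fin n → ℝ) :
    orderedSum a g (Fin.cons 0 x : Fin (n + 1) → ℝ) = orderedSum a g x := by
  rw [orderedSum_cons_of_le_abs fun i => by simp, abs_zero, hg, mul_zero, add_zero]

lemma orderedSum_cons_of_abs_le {x : Fin n → ℝ} {z : ℝ} (hz0 : 0 ≤ z) (hz : ∀ i, |x i| ≤ z) :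
    orderedSum a g (Fin.cons z x : Fin (n + 1) → ℝ) =
      a 1 * g z + orderedSum (fun k => a (k + 1)) g x := by
  simp [orderedSum, dstar_cons_of_abs_le hz0 hz, Fin.sum_univ_succ]

lemma orderedSum_rpow_smul (q : ℝ) (x : Fin n → ℝ) {t : ℝ} (ht : 0 ≤ t) :
    orderedSum a (· ^ q) (t • x) = t ^ q * orderedSum a (· ^ q) x := by
  simp only [orderedSum, dstar_smul x ht, Pi.smul_apply, smul_eq_mul,
    Real.mul_rpow ht (dstar_nonneg x _), Finset.mul_sum, mul_left_comm]

/-- `x_k^*` is the maximum of its pairs with the `n - k` entries that follow it. -/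
lemma orderedSum_of_arith {s d : ℝ} (h : ∀ k, 1 ≤ k → k ≤ n → a k = s + ((n : ℝ) - k) * d)
    (g : ℝ → ℝ) (x : Fin n → ℝ) :
    orderedSum a g x = s * ∑ i, g |x i| +
      d / 2 * ∑ i, ∑ j ∈ Finset.univ.erase i, g (max |x i| |x j|) := by
  have hpairs : ∑ i, ∑ j ∈ Finset.univ.erase i, g (max |x i| |x j|) =
      ∑ i : Fin n, 2 * ((n : ℝ) - 1 - i) * g (dstar x i) := by
    simp only [Finset.sum_erase_eq_sub (Finset.mem_univ _), Finset.sum_sub_distrib, max_self]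
    rw [← sum_sum_dstar x fun s t => g (max s t), sum_sum_max_of_antitone (dstar_antitone x),
      ← sum_dstar x g, ← Finset.sum_sub_distrib]
    exact Finset.sum_congr rfl fun i _ => by ring
  rw [hpairs, ← sum_dstar x g, orderedSum, Finset.mul_sum, Finset.mul_sum,
    ← Finset.sum_add_distrib]
  refine Finset.sum_congr rfl fun i _ => ?_
  rw [h _ (by omega) (by omega)]
  push_cast
  ring

lemma orderedSum_two (a : ℕ → ℝ) (g : ℝ → ℝ) (x y : ℝ) :
    orderedSum a g ![x, y] = a 2 * (g |x| + g |y|) + (a 1 - a 2) * g (max |x| |y|) := by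
  rw [orderedSum_of_arith (s := a 2) (d := a 1 - a 2)]
  · simp only [Fin.sum_univ_two, Matrix.cons_val_zero, Matrix.cons_val_one,
      Matrix.cons_val_fin_one, Finset.mem_univ, Finset.sum_erase_eq_sub, max_self,
      Finset.sum_sub_distrib, max_comm |y|]
    ring
  · intro k hk1 hk2
    interval_cases k <;> push_cast <;> ring

lemma dstar_three_zero (x y z : ℝ) : dstar ![x, y, z] 0 = max |x| (max |y| |z|) := by
  refine dstar_zero_eq_of_isGreatest ⟨?_, ?_⟩
  · rcases max_choice |x| (max |y| |z|) with h | h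
    · exact ⟨0, h.symm⟩
    · rcases max_choice |y| |z| with h' | h'
      · exact ⟨1, (h.trans h').symm⟩
      · exact ⟨2, (h.trans h').symm⟩
  · rintro _ ⟨i, rfl⟩
    fin_cases i <;> simp

lemma orderedSum_three (a : ℕ → ℝ) (g : ℝ → ℝ) (x y z : ℝ) :
    orderedSum a g ![x, y, z] = a 3 * (g |x| + g |y| + g |z|) +
      (a 2 - a 3) * (g (max |x| |y|) + g (max |x| |z|) + g (max |y| |z|)) +
      (a 1 - 2 * a 2 + a 3) * g (max |x| (max |y| |z|)) := by
  have harith := orderedSum_of_arith (n := 3) (s := a 3) (d := a 2 - a 3)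
    (fun k _ _ => rfl) g ![x, y, z]
  have hsplit : orderedSum a g ![x, y, z] =
      orderedSum (fun k => a 3 + ((3 : ℕ) - k) * (a 2 - a 3)) g ![x, y, z] +
        (a 1 - 2 * a 2 + a 3) * g (dstar ![x, y, z] 0) := by
    simp only [orderedSum, Fin.sum_univ_three, Fin.val_zero, Fin.val_one, Fin.val_two]
    push_cast
    ring
  rw [hsplit, harith, dstar_three_zero]
  simp only [Fin.sum_univ_three, Fin.isValue, Matrix.cons_val_zero, Matrix.cons_val_one,
    Matrix.cons_val, Finset.mem_univ, Finset.sum_erase_eq_sub, max_self, Finset.sum_sub_distrib,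
    max_comm |y| |x|, max_comm |z|]
  ring

end Rearrangement

/-! ### Tests of positive and of negative type -/

section Tests

variable {G H : Type*} [AddCommGroup G] [AddCommGroup H] {f N : G → ℝ}

lemma autoConv_one_neg_one (u : G) (f : G → ℝ) (x : G) :
    autoConv ![1, -1] ![0, u] f x = 2 * f x - f (x + u) - f (x - u) := by
  simp only [autoConv, Fin.sum_univ_two, Matrix.cons_val_zero, Matrix.cons_val_one, sub_self,
    add_zero, zero_sub, sub_zero, ← sub_eq_add_neg]
  ring

lemma IsNegType.add_sub_two_mul (hN : IsNegType N) (u : G) :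
    IsPosType fun x => N (x + u) + N (x - u) - 2 * N x := by
  have h := hN.neg_autoConv (c := ![1, -1]) (u := ![0, u]) (by simp)
  exact h.congr fun x => by rw [autoConv_one_neg_one]; ring

namespace IsPosType

lemma const_mul (hf : IsPosType f) {t : ℝ} (ht : 0 ≤ t) : IsPosType fun x => t * f x :=
  fun ι _ u => (hf ι u).smul ht

lemma two_mul_sub_sub (hf : IsPosType f) (u : G) :
    IsPosType fun x => 2 * f x - f (x + u) - f (x - u) :=
  (hf.autoConv (c := ![1, -1]) (u := ![0, u])).congr (autoConv_one_neg_one u f)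

lemma apply_le_apply_zero (hf : IsPosType f) (x : G) : f x ≤ f 0 := by
  have h := (hf.two_mul_sub_sub x).apply_zero_nonneg
  rw [zero_add, zero_sub, hf.apply_neg] at h
  linarith

lemma sum_sum_nonneg (hf : IsPosType f) {ι : Type} [Fintype ι] (u : ι → G) :
    0 ≤ ∑ i, ∑ j, f (u i - u j) := by
  simpa [dotProduct_mulVec_eq_sum] using (hf ι u).dotProduct_mulVec_nonneg 1

lemma nonneg_of_eq_of_ne (hf : IsPosType f) {u : ℕ → G} {K : ℝ}
    (h : ∀ i j, i ≠ j → f (u i - u j) = K) : 0 ≤ K := by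
  by_contra! hK
  obtain ⟨m, hm⟩ := exists_lt_nsmul (neg_pos.2 hK) (f 0)
  have hsplit : ∀ i j : Fin (m + 1), f (u i - u j) = K + if i = j then f 0 - K else 0 :=
    fun i j => by
      split_ifs with hij
      · rw [hij, sub_self, add_sub_cancel]
      · rw [h i j (Fin.val_injective.ne hij), add_zero]
  have hsum := hf.sum_sum_nonneg fun i : Fin (m + 1) => u i
  simp only [hsplit, Finset.sum_add_distrib, Finset.sum_ite_eq, Finset.mem_univ, if_true,
    Finset.sum_const, Finset.card_univ, Fintype.card_fin, nsmul_eq_mul] at hsum hm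
  push_cast at hsum
  nlinarith [(by positivity : (0 : ℝ) < m + 1)]

end IsPosType

/-- The integral of an even function `f` against the convolution of the measure
`δ_0 - δ_1 + δ_L - δ_(L+1)` with its reflection. It compares the kink of `f` at `0` with the one
at `L`. -/
def fourPoint (L : ℝ) (f : ℝ → ℝ) : ℝ :=
  4 * f 0 - 4 * f 1 + 4 * f L - 2 * f (L - 1) - 2 * f (L + 1)

lemma fourPoint_const_add_mul (L K c : ℝ) (f : ℝ → ℝ) :
    fourPoint L (fun t => K + c * f t) = c * fourPoint L f := by
  unfold fourPoint
  ring

lemma IsPosType.fourPoint {f : ℝ × H → ℝ} (hf : IsPosType f)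
    (heven : ∀ t y, f (-t, y) = f (t, y)) (L : ℝ) :
    IsPosType fun y => fourPoint L fun t => f (t, y) := by
  have h := (hf.autoConv (c := ![1, -1, 1, -1])
    (u := ![(0, 0), (1, 0), (L, 0), (L + 1, 0)])).comp (AddMonoidHom.inr ℝ H)
  refine h.congr fun y => ?_
  simp only [_root_.autoConv, _root_.fourPoint, Fin.sum_univ_four, Matrix.cons_val_zero,
    Matrix.cons_val_one, Matrix.cons_val, AddMonoidHom.inr_apply, Prod.mk_sub_mk, Prod.mk_add_mk,
    sub_self, add_zero, zero_add, sub_zero]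
  rw [show (0 : ℝ) - 1 = -1 by ring, show (0 : ℝ) - L = -L by ring,
    show (0 : ℝ) - (L + 1) = -(L + 1) by ring, show 1 - L = -(L - 1) by ring,
    show 1 - (L + 1) = -L by ring, show L - (L + 1) = -1 by ring, show L + 1 - 1 = L by ring,
    show L + 1 - L = 1 by ring]
  simp only [heven]
  ring

lemma IsPosType.fourPoint_nonneg {f : ℝ → ℝ} (hf : IsPosType f) (L : ℝ) :
    0 ≤ _root_.fourPoint L f :=
  ((hf.comp (AddMonoidHom.fst ℝ ℝ)).fourPoint (fun t _ => hf.apply_neg t) L).apply_zero_nonneg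

end Tests

/-! ### Necessity -/

section Necessity

variable {n : ℕ} {a : ℕ → ℝ} {g : ℝ → ℝ} {z : ℝ}

/-- The embedding `y ↦ (0, y)` of `ℝⁿ` into `ℝⁿ⁺¹`. -/
def consZeroHom (n : ℕ) : (Fin n → ℝ) →+ (Fin (n + 1) → ℝ) :=
  .mk' (fun y => Fin.cons 0 y) fun x y => by
    ext i
    cases i using Fin.cases <;> simp

lemma IsNegType.increment (h : IsNegType (orderedSum (n := n + 1) a g)) (z : ℝ) :
    IsPosType fun y : Fin n → ℝ =>
      orderedSum a g (Fin.cons z y : Fin (n + 1) → ℝ) -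
        orderedSum a g (Fin.cons 0 y : Fin (n + 1) → ℝ) := by
  refine (((h.add_sub_two_mul (Fin.cons z 0)).comp (consZeroHom n)).const_mul
    one_half_pos.le).congr fun y => ?_
  have hadd : consZeroHom n y + Fin.cons z 0 = Fin.cons z y := by
    ext i
    cases i using Fin.cases <;> simp [consZeroHom]
  have hsub : orderedSum a g (consZeroHom n y - Fin.cons z 0) =
      orderedSum a g (Fin.cons z y : Fin (n + 1) → ℝ) := orderedSum_congr_abs fun i => by
    cases i using Fin.cases <;> simp [consZeroHom]
  rw [hadd, hsub]
  change 1 / 2 * (_ + _ - 2 * orderedSum a g (Fin.cons 0 y : Fin (n + 1) → ℝ)) = _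
  ring

lemma IsNegType.restrict (hg : g 0 = 0) {m : ℕ} (hmn : m ≤ n)
    (h : IsNegType (orderedSum (n := n) a g)) : IsNegType (orderedSum (n := m) a g) := by
  induction n, hmn using Nat.le_induction with
  | base => exact h
  | succ n _ ih =>
    have hcons : (fun y => orderedSum a g (consZeroHom n y)) = orderedSum a g :=
      funext fun y => orderedSum_cons_zero hg y
    exact ih (hcons ▸ h.comp (consZeroHom n))

/-- If the distinguished coordinate dominates all the others, then the increment is a constant
minus the ordered sum with weights `a k - a (k + 1)`. -/
lemma IsNegType.diff (hg : g 0 = 0) (h : IsNegType (orderedSum (n := n + 1) a g)) :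
    IsNegType (orderedSum (n := n) (fun k => a k - a (k + 1)) g) := fun ι _ u => by
  set z : ℝ := ∑ i, ∑ j, ‖u i - u j‖
  have hle : ∀ i j k, |(u i - u j) k| ≤ z := fun i j k =>
    calc |(u i - u j) k| ≤ ‖u i - u j‖ := norm_le_pi_norm (u i - u j) k
      _ ≤ ∑ j, ‖u i - u j‖ := Finset.single_le_sum (f := fun j => ‖u i - u j‖)
          (fun _ _ => norm_nonneg _) (Finset.mem_univ j)
      _ ≤ z := Finset.single_le_sum (f := fun i => ∑ j, ‖u i - u j‖)
          (fun _ _ => by positivity) (Finset.mem_univ i)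
  have hincr := condNegDef_add_sub (fun _ => a 1 * g z / 2) (h.increment z ι u)
  convert hincr using 1
  ext i j
  simp only [Matrix.of_apply, orderedSum_cons_of_abs_le (by positivity : 0 ≤ z) (hle i j),
    orderedSum_cons_zero hg]
  simp only [orderedSum, sub_mul, Finset.sum_sub_distrib]
  ring

lemma IsNegType.last_weight_nonneg (hg0 : g 0 = 0) (hg1 : 0 < g 1)
    (h : IsNegType (orderedSum (n := n + 1) a g)) : 0 ≤ a (n + 1) := by
  refine nonneg_of_mul_nonneg_left ((h.increment 1).nonneg_of_eq_of_ne
    (u := fun k _ => (k : ℝ)) fun i j hij => ?_) hg1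
  have hfar : 1 ≤ |(i : ℝ) - j| := by
    exact_mod_cast Int.one_le_abs (sub_ne_zero.2 (Nat.cast_injective.ne hij))
  rw [orderedSum_cons_of_le_abs (by simpa using fun _ => hfar), orderedSum_cons_zero hg0, abs_one,
    add_sub_cancel_left]

/-- The increment of `g` between `|t|` and `L`, which vanishes for `L ≤ |t|`. -/
def gap (g : ℝ → ℝ) (L t : ℝ) : ℝ :=
  g (max |t| L) - g |t|

lemma gap_of_le {L t : ℝ} (h : L ≤ |t|) : gap g L t = 0 := by
  rw [gap, max_eq_left h, sub_self]

lemma gap_of_abs_le {L t : ℝ} (h : |t| ≤ L) : gap g L t = g L - g |t| := by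
  rw [gap, max_eq_right h]

lemma gap_neg (L t : ℝ) : gap g L (-t) = gap g L t := by
  rw [gap, gap, abs_neg]

lemma gap_abs (L t : ℝ) : gap g L |t| = gap g L t := by
  rw [gap, gap, abs_abs]

lemma IsNegType.increment_two (hg : g 0 = 0) (h : IsNegType (orderedSum (n := 2) a g))
    (hz : 0 ≤ z) : IsPosType fun x : ℝ => a 2 * g z + (a 1 - a 2) * gap g z x := by
  let φ : ℝ →+ (Fin 1 → ℝ) := .mk' (fun x => ![x]) fun x y => by simp
  refine ((h.increment z).comp φ).congr fun x => ?_
  change orderedSum a g ![z, x] - orderedSum a g ![0, x] = _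
  rw [orderedSum_two, orderedSum_two, gap, abs_of_nonneg hz, abs_zero, hg,
    max_eq_right (abs_nonneg x), max_comm z]
  ring

lemma IsNegType.increment_three (hg : g 0 = 0) (h : IsNegType (orderedSum (n := 3) a g))
    (hz : 0 ≤ z) : IsPosType fun p : ℝ × ℝ =>
      a 3 * g z + (a 2 - a 3) * (gap g z p.1 + gap g z p.2) +
        (a 1 - 2 * a 2 + a 3) * gap g z (max |p.1| |p.2|) := by
  let φ : ℝ × ℝ →+ (Fin 2 → ℝ) := .mk' (fun p => ![p.1, p.2]) fun x y => by simp
  refine ((h.increment z).comp φ).congr fun p => ?_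
  have hmax : 0 ≤ max |p.1| |p.2| := le_max_of_le_left (abs_nonneg _)
  change orderedSum a g ![z, p.1, p.2] - orderedSum a g ![0, p.1, p.2] = _
  rw [orderedSum_three, orderedSum_three, gap, gap, gap, abs_of_nonneg hz, abs_zero, hg,
    abs_of_nonneg hmax, max_eq_right hmax, max_eq_right (abs_nonneg p.1),
    max_eq_right (abs_nonneg p.2), max_comm z, max_comm z, max_comm z]
  ring

lemma IsNegType.two_le (hg0 : g 0 = 0) (hg1 : 0 < g 1)
    (h : IsNegType (orderedSum (n := 2) a g)) : a 2 ≤ a 1 := by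
  have hle := (h.increment_two hg0 zero_le_one).apply_le_apply_zero 1
  rw [gap_of_le abs_one.ge, gap_of_abs_le (by simp), abs_zero, hg0] at hle
  exact sub_nonneg.1 (nonneg_of_mul_nonneg_left (by linarith) hg1)

/-- The four point test in the first variable of the function `gap g L (max |t| |y|)` on `ℝ²`. -/
def fourPointGap (g : ℝ → ℝ) (L y : ℝ) : ℝ :=
  fourPoint L fun t => gap g L (max |t| |y|)

section FourPointGap

variable {L y : ℝ}

lemma fourPointGap_of_le (hy : L ≤ |y|) : fourPointGap g L y = 0 := by
  have h : ∀ t : ℝ, gap g L (max |t| |y|) = 0 := fun t =>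
    gap_of_le (hy.trans ((le_max_right _ _).trans (le_abs_self _)))
  simp only [fourPointGap, fourPoint, h, mul_zero, sub_zero, add_zero]

lemma fourPointGap_of_one_le (hy1 : 1 ≤ |y|) (hyL : |y| ≤ L - 1) :
    fourPointGap g L y = -2 * (g L - g (L - 1)) := by
  simp only [fourPointGap, fourPoint, abs_zero, abs_one, abs_of_nonneg (by linarith : 0 ≤ L),
    abs_of_nonneg (by linarith : 0 ≤ L - 1), abs_of_nonneg (by linarith : 0 ≤ L + 1),
    max_eq_right (abs_nonneg y), max_eq_right hy1, max_eq_left hyL,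
    max_eq_left (by linarith : |y| ≤ L), max_eq_left (by linarith : |y| ≤ L + 1)]
  rw [gap_of_le (le_abs_self L), gap_of_le (by linarith [le_abs_self (L + 1)] : L ≤ |L + 1|),
    gap_of_abs_le (by rw [abs_of_nonneg] <;> linarith : |L - 1| ≤ L),
    abs_of_nonneg (by linarith : 0 ≤ L - 1)]
  ring

lemma fourPointGap_zero (g : ℝ → ℝ) (L : ℝ) : fourPointGap g L 0 = fourPoint L (gap g L) := by
  have h : ∀ t : ℝ, max |t| |0| = |t| := fun t => by rw [abs_zero, max_eq_left (abs_nonneg t)]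
  simp only [fourPointGap, h, gap_abs]

lemma fourPoint_gap (hL : 1 ≤ L) :
    fourPoint L (gap g L) = 4 * (g 1 - g 0) - 2 * (g L - g (L - 1)) := by
  rw [fourPoint, gap_of_le (le_abs_self L),
    gap_of_le (by linarith [le_abs_self (L + 1)] : L ≤ |L + 1|),
    gap_of_abs_le (by rw [abs_of_nonneg] <;> linarith : |L - 1| ≤ L),
    gap_of_abs_le (by rwa [abs_one] : |1| ≤ L), gap_of_abs_le (by rw [abs_zero]; linarith),
    abs_of_nonneg (by linarith : 0 ≤ L - 1), abs_zero, abs_one]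
  ring

end FourPointGap

/-- The kink of the gap at `L` must not outweigh the one at `0`. -/
lemma IsNegType.increment_le_of_two (hg : g 0 = 0) (h : IsNegType (orderedSum (n := 2) a g))
    (h12 : a 2 < a 1) {L : ℝ} (hL : 1 ≤ L) : g L - g (L - 1) ≤ 2 * g 1 := by
  have hpos := (h.increment_two hg (zero_le_one.trans hL)).fourPoint_nonneg L
  rw [fourPoint_const_add_mul, fourPoint_gap hL, hg] at hpos
  linarith [nonneg_of_mul_nonneg_right hpos (sub_pos.2 h12)]

lemma two_mul_fourPointGap_sub_sub {L : ℕ} (hg : g 0 = 0) (i j : Fin L) :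
    2 * fourPointGap g L (i - j) - fourPointGap g L (i - j + 2 * L) -
      fourPointGap g L (i - j - 2 * L) =
        (if i = j then 8 * g 1 else 0) - 4 * (g L - g (L - 1)) := by
  have hL : (1 : ℝ) ≤ L := by exact_mod_cast Nat.one_le_of_lt i.2
  have hlt : |(i : ℝ) - j| ≤ L - 1 := by
    have hi : ((i : ℕ) : ℝ) + 1 ≤ L := by exact_mod_cast i.2
    have hj : ((j : ℕ) : ℝ) + 1 ≤ L := by exact_mod_cast j.2
    exact abs_le.2 ⟨by linarith [(i : ℕ).cast_nonneg (α := ℝ)],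
      by linarith [(j : ℕ).cast_nonneg (α := ℝ)]⟩
  rw [fourPointGap_of_le (y := i - j + 2 * L) (le_abs.2 (.inl (by linarith [abs_le.1 hlt]))),
    fourPointGap_of_le (y := i - j - 2 * L) (le_abs.2 (.inr (by linarith [abs_le.1 hlt])))]
  split_ifs with hij
  · rw [hij, sub_self, fourPointGap_zero, fourPoint_gap hL, hg]
    ring
  · have h1 : 1 ≤ |((i : ℕ) : ℝ) - (j : ℕ)| := by
      have hsub : ((i : ℕ) : ℤ) - (j : ℕ) ≠ 0 :=
        sub_ne_zero.2 (Nat.cast_injective.ne (Fin.val_injective.ne hij))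
      exact_mod_cast Int.one_le_abs hsub
    rw [fourPointGap_of_one_le h1 hlt]
    ring

/-- Test on two blocks of `L` consecutive integers at distance `2 L`, with opposite signs. On
each block only the `L` diagonal pairs see the kink at `0`, whereas all `L ^ 2` pairs see the one
at `L`; the terms depending on one variable only cancel. -/
lemma IsNegType.mul_increment_le_of_three (hg : g 0 = 0)
    (h : IsNegType (orderedSum (n := 3) a g)) (h123 : a 2 - a 3 < a 1 - a 2) {L : ℕ}
    (hL : 0 < L) : L * (g L - g (L - 1)) ≤ 2 * g 1 := by
  let B := fourPointGap g L
  have hW := ((h.increment_three hg L.cast_nonneg).fourPoint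
    (fun t y => by simp only [gap_neg, abs_neg]) L).congr
    (f' := fun y => (a 2 - a 3) * fourPoint L (gap g L) + (a 1 - 2 * a 2 + a 3) * B y) fun y => by
      simp only [B, fourPointGap, fourPoint]
      ring
  have hV := (hW.two_mul_sub_sub (2 * (L : ℝ))).congr (f' := fun y =>
    (a 1 - 2 * a 2 + a 3) * (2 * B y - B (y + 2 * L) - B (y - 2 * L))) fun y => by ring
  have hsum := hV.sum_sum_nonneg fun i : Fin L => ((i : ℕ) : ℝ)
  simp only [B, two_mul_fourPointGap_sub_sub hg, ← Finset.mul_sum] at hsum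
  have hnonneg := nonneg_of_mul_nonneg_right hsum (by linarith)
  simp only [Finset.sum_sub_distrib, Finset.sum_ite_eq, Finset.mem_univ, if_true,
    Finset.sum_const, Finset.card_univ, Fintype.card_fin, nsmul_eq_mul] at hnonneg
  have hfactor : 0 ≤ (4 * L : ℝ) * (2 * g 1 - L * (g L - g (L - 1))) := by linarith
  exact sub_nonneg.1 (nonneg_of_mul_nonneg_right hfactor (by positivity))

variable {q : ℝ}

lemma min_mul_rpow_le_mul_rpow_sub {L : ℝ} (hq : 0 < q) (hL : 1 ≤ L) :
    min q 1 * L ^ q ≤ L * (L ^ q - (L - 1) ^ q) := by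
  have hL0 : 0 < L := by linarith
  have hinv : L⁻¹ ≤ 1 := inv_le_one_of_one_le₀ hL
  have hbernoulli : (1 + -L⁻¹) ^ q ≤ 1 + min q 1 * -L⁻¹ :=
    (Real.rpow_le_rpow_of_exponent_ge' (by linarith) (by linarith [inv_pos.2 hL0])
      (by positivity) (min_le_left q 1)).trans
      (rpow_one_add_le_one_add_mul_self (by linarith) (by positivity) (min_le_right q 1))
  have hfactor : (L - 1) ^ q = L ^ q * (1 + -L⁻¹) ^ q := by
    rw [← Real.mul_rpow hL0.le (by linarith)]
    congr 1
    field_simp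
    ring
  have hle := mul_le_mul_of_nonneg_left hbernoulli (by positivity : 0 ≤ L * L ^ q)
  have hexpand : L * L ^ q * (1 + min q 1 * -L⁻¹) = L * L ^ q - min q 1 * L ^ q := by
    field_simp
    ring
  rw [hexpand] at hle
  rw [hfactor]
  linarith

lemma IsNegType.two_eq (hq : 1 < q) (h : IsNegType (orderedSum (n := 2) a (· ^ q))) :
    a 1 = a 2 := by
  have hq0 : 0 < q := by linarith
  have hzero : (0 : ℝ) ^ q = 0 := Real.zero_rpow hq0.ne'
  refine le_antisymm (not_lt.1 fun hlt => ?_)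
    (h.two_le hzero (by rw [Real.one_rpow]; exact one_pos))
  obtain ⟨L, hL2, hL1⟩ := ((tendsto_rpow_atTop (sub_pos.2 hq)).eventually_gt_atTop 2
    |>.and (eventually_ge_atTop 1)).exists
  have hL0 : 0 < L := by linarith
  have hupper := h.increment_le_of_two hzero hlt hL1
  have hlower := min_mul_rpow_le_mul_rpow_sub hq0 hL1
  rw [min_eq_right hq.le, one_mul, ← div_le_iff₀' hL0, ← Real.rpow_sub_one hL0.ne'] at hlower
  rw [Real.one_rpow] at hupper
  linarith

lemma IsNegType.three_eq (hq : 0 < q) (h : IsNegType (orderedSum (n := 3) a (· ^ q))) :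
    a 1 - a 2 = a 2 - a 3 := by
  have hzero : (0 : ℝ) ^ q = 0 := Real.zero_rpow hq.ne'
  refine le_antisymm (not_lt.1 fun hlt => ?_)
    ((h.diff hzero).two_le hzero (by rw [Real.one_rpow]; exact one_pos))
  have hlim : Tendsto (fun L : ℕ => min q 1 * (L : ℝ) ^ q) atTop atTop :=
    ((tendsto_rpow_atTop hq).comp tendsto_natCast_atTop_atTop).const_mul_atTop
      (lt_min hq one_pos)
  obtain ⟨L, hL2, hL0⟩ := ((hlim.eventually_gt_atTop 2).and (eventually_gt_atTop 0)).exists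
  have hupper := h.mul_increment_le_of_three hzero hlt hL0
  have hlower := min_mul_rpow_le_mul_rpow_sub (L := L) hq (by exact_mod_cast hL0)
  rw [Real.one_rpow] at hupper
  linarith

lemma IsNegType.sub_succ_eq (hq : 0 < q) (h : IsNegType (orderedSum (n := n) a (· ^ q))) {k : ℕ}
    (hk : 1 ≤ k) (hkn : k + 1 ≤ n) : a k - a (k + 1) = a 1 - a 2 := by
  have hzero : (0 : ℝ) ^ q = 0 := Real.zero_rpow hq.ne'
  induction n generalizing a k with
  | zero => omega
  | succ n ih =>
    induction k, hk using Nat.le_induction with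
    | base => rfl
    | succ k hk ihk =>
      have hsecond := ih (h.diff hzero) hk (by omega)
      have hthree := (h.restrict hzero (by omega : 3 ≤ n + 1)).three_eq hq
      linarith [ihk (by omega)]

end Necessity

/-! ### Characterization of the weights -/

section Characterization

variable {n : ℕ} {a : ℕ → ℝ} {q s d : ℝ}

lemma isNegType_orderedSum_rpow_of_arith (hq0 : 0 < q) (hq2 : q ≤ 2) (hs : 0 ≤ s) (hd : 0 ≤ d)
    (hqd : q ≤ 1 ∨ d = 0) (h : ∀ k, 1 ≤ k → k ≤ n → a k = s + ((n : ℝ) - k) * d) :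
    IsNegType (orderedSum (n := n) a (· ^ q)) := fun ι _ u => by
  have habs : CondNegDef (∑ k, Matrix.of fun i j => |u i k - u j k| ^ q) :=
    .sum _ fun k _ => condNegDef_norm_sub_rpow (fun i => u i k) hq0 hq2
  have hmax : CondNegDef ((d / 2) • ∑ k, ∑ l ∈ Finset.univ.erase k,
      Matrix.of fun i j => max |u i k - u j k| |u i l - u j l| ^ q) := by
    rcases hqd with hq1 | rfl
    · exact .smul (.sum _ fun k _ => .sum _ fun l _ =>
        condNegDef_max_abs_sub_rpow (fun i => u i k) (fun i => u i l) hq0 hq1) (by positivity)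
    · simpa only [zero_div, zero_smul] using CondNegDef.zero
  convert (habs.smul hs).add hmax using 1
  ext i j
  simp only [Matrix.of_apply, orderedSum_of_arith h, Pi.sub_apply, Matrix.add_apply,
    Matrix.smul_apply, Matrix.sum_apply, smul_eq_mul]

lemma eq_add_mul_of_sub_succ_eq (h : ∀ k, 1 ≤ k → k + 1 ≤ n → a k - a (k + 1) = d) {k : ℕ}
    (hk : 1 ≤ k) (hkn : k ≤ n) : a k = a n + ((n : ℝ) - k) * d := by
  induction hkn using Nat.decreasingInduction with
  | self => rw [sub_self, zero_mul, add_zero]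
  | of_succ k hkn ih =>
    have hnext := ih (by omega)
    push_cast at hnext
    linarith [h k hk hkn]

lemma isNegType_orderedSum_rpow_iff (hn : 2 ≤ n) (hq0 : 0 < q) (hq2 : q ≤ 2) :
    IsNegType (orderedSum (n := n) a (· ^ q)) ↔ 0 ≤ a n ∧ ∃ d, 0 ≤ d ∧
      (∀ k, 1 ≤ k → k + 1 ≤ n → a k - a (k + 1) = d) ∧ (q ≤ 1 ∨ d = 0) := by
  have hzero : (0 : ℝ) ^ q = 0 := Real.zero_rpow hq0.ne'
  have hone : 0 < (1 : ℝ) ^ q := by rw [Real.one_rpow]; exact one_pos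
  refine ⟨fun h => ⟨?_, a 1 - a 2, ?_, fun k hk hkn => h.sub_succ_eq hq0 hk hkn, ?_⟩,
    fun ⟨ha, d, hd, h, hqd⟩ => ?_⟩
  · obtain ⟨m, rfl⟩ : ∃ m, n = m + 1 := ⟨n - 1, by omega⟩
    exact h.last_weight_nonneg hzero hone
  · exact sub_nonneg.2 ((h.restrict hzero hn).two_le hzero hone)
  · exact (le_or_gt q 1).imp_right fun hq1 => sub_eq_zero.2 ((h.restrict hzero hn).two_eq hq1)
  · exact isNegType_orderedSum_rpow_of_arith hq0 hq2 ha hd hqd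
      fun k hk hkn => eq_add_mul_of_sub_succ_eq h hk hkn

lemma sub_succ_eq_zero_iff_eq :
    (∀ k, 1 ≤ k → k + 1 ≤ n → a k - a (k + 1) = 0) ↔
      ∀ i j, 1 ≤ i → i ≤ n → 1 ≤ j → j ≤ n → a i = a j := by
  refine ⟨fun h => ?_, fun h k hk hkn => sub_eq_zero.2 (h _ _ hk (by omega) (by omega) hkn)⟩
  have hlast : ∀ i, 1 ≤ i → i ≤ n → a i = a n := fun i hi hin => by
    rw [eq_add_mul_of_sub_succ_eq h hi hin, mul_zero, add_zero]
  exact fun i j hi hin hj hjn => (hlast i hi hin).trans (hlast j hj hjn).symm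

end Characterization

theorem stmt6_general (n : ℕ) (hn : 2 ≤ n) (q : ℝ) (hq0 : 0 < q) (hq2 : q ≤ 2) (a : ℕ → ℝ) :
    IsPosDefFn (fun x : Fin n → ℝ =>
        (Real.exp (-(∑ i : Fin n, a (i.1 + 1) * dstar x i ^ q)) : ℂ)) ↔
      0 ≤ a n ∧
      ((1 < q ∧ ∀ i j, 1 ≤ i → i ≤ n → 1 ≤ j → j ≤ n → a i = a j) ∨
       (q ≤ 1 ∧ ∃ d : ℝ, 0 ≤ d ∧ ∀ k, 1 ≤ k → k + 1 ≤ n → a k - a (k + 1) = d)) := by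
  rw [isPosDefFn_ofReal_iff]
  refine (isPosType_exp_neg_iff_isNegType (N := orderedSum a (· ^ q)) hq0
    fun t x ht => orderedSum_rpow_smul q x ht).trans ?_
  rw [isNegType_orderedSum_rpow_iff hn hq0 hq2, ← sub_succ_eq_zero_iff_eq]
  refine and_congr_right fun _ => ?_
  rcases lt_or_ge 1 q with hq | hq
  · simp [hq, hq.not_ge]
  · simp [hq, hq.not_gt]

/-- For `n ≥ 2`, `q ∈ (0,2]` and nonnegative `a 1, …, a n`, the function
`x ↦ exp(−∑ aₖ (xₖ^*)^q)` is positive definite on `ℝⁿ` iff either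
`1 < q ≤ 2` and all the `aₖ` are equal, or `q ≤ 1` and the `aₖ` form a
non-increasing arithmetic progression. -/
theorem stmt6 (n : ℕ) (hn : 2 ≤ n) (q : ℝ) (hq0 : 0 < q) (hq2 : q ≤ 2)
    (a : ℕ → ℝ) (ha : ∀ i, 1 ≤ i → i ≤ n → 0 ≤ a i) :
    IsPosDefFn (fun x : Fin n → ℝ =>
        (Real.exp (-(∑ i : Fin n, a (i.1 + 1) * dstar x i ^ q)) : ℂ)) ↔
      ((1 < q ∧ ∀ i j, 1 ≤ i → i ≤ n → 1 ≤ j → j ≤ n → a i = a j) ∨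
       (q ≤ 1 ∧ ∃ d : ℝ, 0 ≤ d ∧ ∀ k, 1 ≤ k → k + 1 ≤ n → a k - a (k + 1) = d)) :=
  (stmt6_general n hn q hq0 hq2 a).trans (and_iff_right (ha n (by omega) le_rfl))
end

section
/- For all real numbers a_1, …, a_n, every function f : ℝ → ℝ, and every x = (x_1,…,x_n) ∈ ℝ^n, one has a_1 f(x_1^*) + … + a_n f(x_n^*) = Σ_{k=1}^n ( Σ_{j=1}^k (−1)^{j−1} C(k−1, j−1) a_{n−k+j} ) · Σ_{1 ≤ i_1 < … < i_k ≤ n} f(max(|x_{i_1}|, …, |x_{i_k}|)), where C(·,·) denotes the binomial coefficient and the inner sum on the right runs over all k-element subsets {i_1 < … < i_k} of {1, …, n}. -/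
/-- `max_{i ∈ s} |x i|` (with the convention `0` for `s = ∅`). -/
noncomputable def maxAbsOn {n : ℕ} (x : Fin n → ℝ) (s : Finset (Fin n)) : ℝ :=
  s.fold max 0 (fun i => |x i|)

section

open Finset
open scoped fwdDiff

lemma sum_powersetCard_succ_insert {ι M : Type*} [DecidableEq ι] [AddCommMonoid M] {s : Finset ι}
    {c : ι} (hc : c ∉ s) (k : ℕ) (F : Finset ι → M) :
    ∑ t ∈ powersetCard (k + 1) (insert c s), F t =
      ∑ t ∈ powersetCard (k + 1) s, F t + ∑ u ∈ powersetCard k s, F (insert c u) := by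
  have notMem_of_mem {l : ℕ} {u : Finset ι} (hu : u ∈ powersetCard l s) : c ∉ u := fun hcu =>
    hc ((mem_powersetCard.1 hu).1 hcu)
  have hdisj : Disjoint (powersetCard (k + 1) s) ((powersetCard k s).image (insert c)) := by
    rw [disjoint_left]
    rintro _ ht h
    obtain ⟨u, -, rfl⟩ := mem_image.1 h
    exact notMem_of_mem ht (mem_insert_self c u)
  have hinj : Set.InjOn (insert c) (powersetCard k s : Set (Finset ι)) := fun u hu v hv huv => by
    rw [← erase_insert (notMem_of_mem hu), huv, erase_insert (notMem_of_mem hv)]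
  rw [powersetCard_succ_insert hc, sum_union hdisj, sum_image hinj]

lemma sum_powersetCard_succ_eq_sum_insert_min {ι M : Type*} [LinearOrder ι] [AddCommMonoid M]
    (s : Finset ι) (k : ℕ) (F : Finset ι → M) :
    ∑ t ∈ powersetCard (k + 1) s, F t =
      ∑ m ∈ s, ∑ u ∈ powersetCard k {i ∈ s | m < i}, F (insert m u) := by
  induction s using Finset.induction_on_min with
  | empty => rw [powersetCard_eq_empty.2 (card_empty.trans_lt k.succ_pos), sum_empty, sum_empty]
  | insert c s hc ih =>
    have hcs : c ∉ s := fun h => (hc c h).false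
    have above_c : {i ∈ insert c s | c < i} = s := by
      rw [filter_insert, if_neg (lt_irrefl c), filter_true_of_mem hc]
    have above_of_mem : ∀ m ∈ s, {i ∈ insert c s | m < i} = {i ∈ s | m < i} := fun m hm => by
      rw [filter_insert, if_neg (hc m hm).not_gt]
    rw [sum_powersetCard_succ_insert hcs, ih, sum_insert hcs, above_c, add_comm]
    congr 1
    exact sum_congr rfl fun m hm => by rw [above_of_mem m hm]

lemma fold_max_eq_of_forall_le {ι α : Type*} [LinearOrder α] {s : Finset ι} {y : ι → α} {b : α}
    {m : ι} (hm : m ∈ s) (hb : b ≤ y m) (hle : ∀ i ∈ s, y i ≤ y m) : s.fold max b y = y m :=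
  le_antisymm ((fold_max_le _).2 ⟨hb, hle⟩) ((le_fold_max _).2 (Or.inr ⟨m, hm, le_rfl⟩))

lemma sum_powersetCard_succ_fold_max_of_antitoneOn {ι α M : Type*} [LinearOrder ι] [LinearOrder α]
    [AddCommMonoid M] {s : Finset ι} {y : ι → α} {b : α} (hy : AntitoneOn y s)
    (hb : ∀ i ∈ s, b ≤ y i) (k : ℕ) (f : α → M) :
    ∑ t ∈ powersetCard (k + 1) s, f (t.fold max b y) =
      ∑ m ∈ s, (#{i ∈ s | m < i}).choose k • f (y m) := by
  rw [sum_powersetCard_succ_eq_sum_insert_min]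
  refine sum_congr rfl fun m hm => ?_
  have max_eq : ∀ u ∈ powersetCard k {i ∈ s | m < i}, (insert m u).fold max b y = y m := by
    intro u hu
    refine fold_max_eq_of_forall_le (mem_insert_self m u) (hb m hm)
      (forall_mem_insert _ _ _ |>.2 ⟨le_rfl, fun i hi => ?_⟩)
    obtain ⟨his, hmi⟩ := mem_filter.1 ((mem_powersetCard.1 hu).1 hi)
    exact hy hm his hmi.le
  rw [sum_congr rfl fun u hu => congrArg f (max_eq u hu), sum_const, card_powersetCard]

lemma sum_powersetCard_succ_fold_max {ι α M : Type*} [Fintype ι] [LinearOrder α] [AddCommMonoid M]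
    {n : ℕ} (σ : Fin n ≃ ι) {y : ι → α} (hy : Antitone (y ∘ σ)) {b : α} (hb : ∀ i, b ≤ y i)
    (k : ℕ) (f : α → M) :
    ∑ s ∈ powersetCard (k + 1) (univ : Finset ι), f (s.fold max b y) =
      ∑ m : Fin n, (n - 1 - m).choose k • f (y (σ m)) := by
  calc ∑ s ∈ powersetCard (k + 1) (univ : Finset ι), f (s.fold max b y)
      = ∑ t ∈ powersetCard (k + 1) (univ : Finset (Fin n)), f (t.fold max b (y ∘ σ)) := by
        rw [← map_univ_equiv σ, powersetCard_map, sum_map]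
        exact sum_congr rfl fun t _ => congrArg f fold_map
    _ = ∑ m : Fin n, (n - 1 - m).choose k • f (y (σ m)) := by
        rw [sum_powersetCard_succ_fold_max_of_antitoneOn (hy.antitoneOn _) fun i _ => hb (σ i)]
        simp only [filter_lt_eq_Ioi, Fin.card_Ioi, Function.comp_apply]

lemma sum_Icc_one_eq_sum_range {M : Type*} [AddCommMonoid M] (g : ℕ → M) (n : ℕ) :
    ∑ k ∈ Icc 1 n, g k = ∑ k ∈ range n, g (k + 1) := by
  rw [range_eq_Ico, sum_Ico_add' g 0 n 1, zero_add, Ico_add_one_right_eq_Icc]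

lemma sum_alternating_choose_mul_eq_fwdDiff_iter {R : Type*} [Ring R] {n k : ℕ} (hk : k < n)
    (a : ℕ → R) :
    ∑ j ∈ Icc 1 (k + 1), (-1 : R) ^ (j - 1) * (k.choose (j - 1)) * a (n - (k + 1) + j) =
      (Δ_[1])^[k] (fun l => a (n - l)) 0 := by
  rw [sum_Icc_one_eq_sum_range, fwdDiff_iter_eq_sum_shift, ← sum_range_reflect]
  refine sum_congr rfl fun i hi => ?_
  have hik : i ≤ k := Nat.lt_succ_iff.1 (mem_range.1 hi)
  have arg_eq : n - (k + 1) + (k - i + 1) = n - (0 + i • 1) := by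
    rw [smul_eq_mul]
    omega
  rw [Nat.add_sub_cancel, Nat.add_sub_cancel, arg_eq, Nat.choose_symm hik, zsmul_eq_mul]
  push_cast
  rfl

lemma sum_range_choose_smul_fwdDiff_iter {G : Type*} [AddCommGroup G] {n N : ℕ} (hN : N < n)
    (g : ℕ → G) :
    ∑ k ∈ range n, N.choose k • (Δ_[1])^[k] g 0 = g N := by
  have newton : g N = ∑ k ∈ range (N + 1), N.choose k • (Δ_[1])^[k] g 0 := by
    simpa only [zero_add, smul_eq_mul, mul_one] using shift_eq_sum_fwdDiff_iter 1 g N 0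
  rw [newton]
  refine (sum_subset (range_subset_range.2 hN) fun k _ hk => ?_).symm
  rw [Nat.choose_eq_zero_of_lt (by simpa using hk), zero_smul]

theorem stmt8_general {ι α R M : Type*} [Fintype ι] [LinearOrder α] [Ring R] [AddCommGroup M]
    [Module R M] {n : ℕ} (σ : Fin n ≃ ι) {y : ι → α} (hy : Antitone (y ∘ σ)) {b : α}
    (hb : ∀ i, b ≤ y i) (a : ℕ → R) (f : α → M) :
    ∑ i : Fin n, a (i + 1) • f (y (σ i)) =
      ∑ k ∈ Icc 1 n,
        (∑ j ∈ Icc 1 k, (-1 : R) ^ (j - 1) * ((k - 1).choose (j - 1)) * a (n - k + j)) •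
          ∑ s ∈ powersetCard k (univ : Finset ι), f (s.fold max b y) := by
  let d (k : ℕ) : R := (Δ_[1])^[k] (fun l => a (n - l)) 0
  have newton (i : Fin n) : a (i + 1) = ∑ k ∈ range n, (n - 1 - i).choose k • d k := by
    have hi : n - (n - 1 - i) = i + 1 := by omega
    rw [sum_range_choose_smul_fwdDiff_iter (by omega) fun l => a (n - l), hi]
  calc ∑ i : Fin n, a (i + 1) • f (y (σ i))
      = ∑ k ∈ range n, d k • ∑ i : Fin n, (n - 1 - i).choose k • f (y (σ i)) := by
        simp only [newton, sum_smul, smul_sum]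
        rw [sum_comm]
        simp only [smul_assoc, smul_comm (d _)]
    _ = _ := by
        rw [sum_Icc_one_eq_sum_range]
        refine sum_congr rfl fun k hk => ?_
        rw [Nat.add_sub_cancel, sum_alternating_choose_mul_eq_fwdDiff_iter (mem_range.1 hk),
          sum_powersetCard_succ_fold_max σ hy hb]

end

lemma antitone_dstar {n : ℕ} (x : Fin n → ℝ) : Antitone (dstar x) := fun _ _ hij =>
  neg_le_neg_iff.1 (Tuple.monotone_sort (fun j => -|x j|) hij)

/-- Lemma 1: `∑ aₖ f(xₖ^*)` expanded in terms of maxima over subsets. -/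
theorem stmt8 (n : ℕ) (a : ℕ → ℝ) (f : ℝ → ℝ) (x : Fin n → ℝ) :
    ∑ i : Fin n, a (i.1 + 1) * f (dstar x i) =
      ∑ k ∈ Finset.Icc 1 n,
        (∑ j ∈ Finset.Icc 1 k,
            (-1 : ℝ) ^ (j - 1) * ((k - 1).choose (j - 1)) * a (n - k + j)) *
          ∑ s ∈ Finset.powersetCard k (Finset.univ : Finset (Fin n)),
            f (maxAbsOn x s) :=
  stmt8_general (y := fun i => |x i|) (Tuple.sort fun j => -|x j|) (antitone_dstar x)
    (fun i => abs_nonneg (x i)) a f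
end

section
/- For all integers n and m with 2 ≤ m ≤ n, Σ_{j=0}^{m−1} (−1)^j C(n−m+j, j) · C(n−1, n−m+j) = 0, where C(·,·) denotes the binomial coefficient. -/
/-! Choosing an `(s + j)`-subset of an `(s + k)`-set and then `j` of its elements is the same as
choosing the `s` elements left over and then `j` of the other `k`. Hence
`∑ j, x ^ j C(s + j, j) C(s + k, s + j)` is `C(s + k, s)` times the binomial expansion of
`(x + 1) ^ k`, and at `x = -1` this vanishes as soon as `k ≠ 0`. The theorem is the case
`s = n - m`, `k = m - 1`. -/

theorem add_choose_mul_add_choose_add (s k j : ℕ) :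
    (s + j).choose j * (s + k).choose (s + j) = k.choose j * (s + k).choose s := by
  calc (s + j).choose j * (s + k).choose (s + j)
      = (s + k).choose (s + j) * (s + j).choose s := by rw [mul_comm, Nat.choose_symm_add]
    _ = (s + k).choose s * (s + k - s).choose (s + j - s) := Nat.choose_mul (Nat.le_add_right s j)
    _ = k.choose j * (s + k).choose s := by
      rw [Nat.add_sub_cancel_left, Nat.add_sub_cancel_left, mul_comm]

theorem sum_range_pow_mul_add_choose_mul_add_choose_add {R : Type*} [Semiring R]
    (x : R) (s k : ℕ) :
    ∑ j ∈ Finset.range (k + 1), x ^ j * (s + j).choose j * (s + k).choose (s + j) =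
      (x + 1) ^ k * (s + k).choose s := by
  calc ∑ j ∈ Finset.range (k + 1), x ^ j * (s + j).choose j * (s + k).choose (s + j)
      = ∑ j ∈ Finset.range (k + 1), x ^ j * k.choose j * (s + k).choose s := by
        refine Finset.sum_congr rfl fun j _ ↦ ?_
        rw [mul_assoc, mul_assoc, ← Nat.cast_mul, ← Nat.cast_mul, add_choose_mul_add_choose_add]
    _ = (x + 1) ^ k * (s + k).choose s := by
        simp only [(Commute.one_right x).add_pow, one_pow, mul_one, Finset.sum_mul]

/-- For `2 ≤ m ≤ n`, `∑_{j=0}^{m−1} (−1)^j C(n−m+j, j) C(n−1, n−m+j) = 0`. -/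
theorem stmt9 (n m : ℕ) (hm : 2 ≤ m) (hmn : m ≤ n) :
    ∑ j ∈ Finset.range m,
        (-1 : ℤ) ^ j * ((n - m + j).choose j) * ((n - 1).choose (n - m + j)) = 0 := by
  have row_eq : n - m + (m - 1) = n - 1 := by lia
  have range_eq : m - 1 + 1 = m := by lia
  have exponent_ne_zero : m - 1 ≠ 0 := by lia
  have expansion := sum_range_pow_mul_add_choose_mul_add_choose_add (-1 : ℤ) (n - m) (m - 1)
  rwa [row_eq, range_eq, neg_add_cancel, zero_pow exponent_ne_zero, zero_mul] at expansion
end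

section
/- Let n ≥ 3, q > 0, and let a_1, …, a_n be real numbers and α, β reals with a_1 − a_2 = a_2 − a_3 = … = a_{n−2} − a_{n−1} = α and a_{n−1} − a_n = β. Then for every x = (x_1,…,x_n) ∈ ℝ^n, a_1 (x_1^*)^q + … + a_n (x_n^*)^q = a_n (|x_1|^q + … + |x_n|^q) + β Σ_{1 ≤ i < j ≤ n} max(|x_i|,|x_j|)^q + (β − α) Σ_{k=3}^n (−1)^k Σ_{1 ≤ i_1 < … < i_k ≤ n} max(|x_{i_1}|, …, |x_{i_k}|)^q. -/
/-!
Write `y 0 ≥ … ≥ y (n - 1)` for the non-increasing rearrangement of `|x|`. The maximum of `y` over a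
set of indices is its value at the smallest index, and `(n - 1 - i).choose (k - 1)` sets of size `k`
have smallest index `i`, so both sides of the formula are linear combinations of the `y i ^ q`. The
full alternating sum of a row of Pascal's triangle vanishes unless the row is that of `0`, that is,
unless `i = n - 1`. Hence the alternating sum over `k ≥ 3` is determined by the omitted terms `k = 1`
and `k = 2` and a correction at the last index.
-/

open Finset

section SumOverSubsets

variable {ι X M : Type*} [AddCommMonoid M]

theorem sum_powersetCard_succ_eq_sum_insert_filter_lt [LinearOrder ι] (k : ℕ) (s : Finset ι)
    (F : Finset ι → M) :
    ∑ t ∈ powersetCard (k + 1) s, F t =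
      ∑ i ∈ s, ∑ t ∈ powersetCard k {j ∈ s | i < j}, F (insert i t) := by
  induction s using Finset.induction_on_min with
  | empty => rw [powersetCard_eq_empty.mpr k.succ_pos, sum_empty, sum_empty]
  | insert a s ha ih =>
    have ha_notMem : a ∉ s := fun h => (ha a h).false
    have notMem_of_mem {m : ℕ} {t : Finset ι} (ht : t ∈ powersetCard m s) : a ∉ t :=
      fun h => ha_notMem ((mem_powersetCard.mp ht).1 h)
    have filter_min : {j ∈ insert a s | a < j} = s := by
      rw [filter_insert, if_neg (lt_irrefl a), filter_true_of_mem ha]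
    have filter_of_mem {i : ι} (hi : i ∈ s) : {j ∈ insert a s | i < j} = {j ∈ s | i < j} := by
      rw [filter_insert, if_neg (ha i hi).not_gt]
    have hdisj : Disjoint (powersetCard (k + 1) s) ((powersetCard k s).image (insert a)) := by
      refine disjoint_left.mpr fun t ht ht' => ?_
      obtain ⟨u, -, rfl⟩ := mem_image.mp ht'
      exact notMem_of_mem ht (mem_insert_self a u)
    have hinj : Set.InjOn (insert a) (powersetCard k s : Set (Finset ι)) := fun t ht u hu h => by
      rw [← erase_insert (notMem_of_mem ht), h, erase_insert (notMem_of_mem hu)]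
    rw [powersetCard_succ_insert ha_notMem, sum_union hdisj, sum_image hinj, ih,
      sum_insert ha_notMem, filter_min, add_comm]
    exact congrArg _ (sum_congr rfl fun i hi => by rw [filter_of_mem hi])

theorem sum_powersetCard_map_perm [Fintype ι] (σ : Equiv.Perm ι) (k : ℕ) (F : Finset ι → M) :
    ∑ s ∈ powersetCard k univ, F (s.map σ.toEmbedding) = ∑ s ∈ powersetCard k univ, F s := by
  conv_rhs => rw [← map_univ_equiv σ, powersetCard_map, sum_map]
  rfl

variable [SemilatticeSup X]

theorem sum_filter_lt_sup_eq_sum_powersetCard_two [OrderBot X] [Fintype ι] [LinearOrder ι]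
    (x : ι → X) (f : X → M) :
    ∑ p : ι × ι with p.1 < p.2, f (x p.1 ⊔ x p.2) =
      ∑ s ∈ powersetCard 2 univ, f (s.sup x) := by
  rw [sum_powersetCard_succ_eq_sum_insert_filter_lt, sum_filter, Fintype.sum_prod_type]
  refine sum_congr rfl fun i _ => ?_
  rw [← sum_filter, powersetCard_one, sum_map]
  simp only [Function.Embedding.coeFn_mk, sup_insert, sup_singleton]

variable [OrderBot X] [LinearOrder ι] [LocallyFiniteOrderTop ι] {x : ι → X}

theorem sup_insert_eq_of_antitone_of_subset_Ioi (hx : Antitone x) {i : ι} {t : Finset ι}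
    (ht : t ⊆ Ioi i) : (insert i t).sup x = x i := by
  rw [sup_insert, sup_eq_left]
  exact Finset.sup_le fun j hj => hx (mem_Ioi.mp (ht hj)).le

theorem sum_powersetCard_succ_sup_of_antitone [Fintype ι] (hx : Antitone x) (k : ℕ) (f : X → M) :
    ∑ s ∈ powersetCard (k + 1) univ, f (s.sup x) = ∑ i, (#(Ioi i)).choose k • f (x i) := by
  rw [sum_powersetCard_succ_eq_sum_insert_filter_lt]
  refine sum_congr rfl fun i _ => ?_
  rw [filter_lt_eq_Ioi, ← card_powersetCard, ← sum_const]
  exact sum_congr rfl fun t ht => by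
    rw [sup_insert_eq_of_antitone_of_subset_Ioi hx (mem_powersetCard.mp ht).1]

theorem sum_powersetCard_succ_sup_of_antitone_comp [Fintype ι] {σ : Equiv.Perm ι}
    (hσ : Antitone (x ∘ σ)) (k : ℕ) (f : X → M) :
    ∑ s ∈ powersetCard (k + 1) univ, f (s.sup x) =
      ∑ i, (#(Ioi i)).choose k • f (x (σ i)) := by
  rw [← sum_powersetCard_map_perm σ]
  simp only [sup_map]
  exact sum_powersetCard_succ_sup_of_antitone hσ k f

end SumOverSubsets

section Coefficients

variable {R : Type*} [Ring R]

theorem sum_range_neg_one_pow_mul_choose {m n : ℕ} (hm : m < n) :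
    ∑ k ∈ range n, (-1 : R) ^ k * (m.choose k : R) = if m = 0 then 1 else 0 := by
  have hfull : ∑ k ∈ range (m + 1), (-1 : R) ^ k * (m.choose k : R) = if m = 0 then 1 else 0 :=
    mod_cast congrArg (Int.cast : ℤ → R) (Int.alternating_sum_range_choose (n := m))
  rw [← hfull]
  refine (sum_subset (range_subset_range.mpr hm) fun k _ hk => ?_).symm
  rw [Nat.choose_eq_zero_of_lt (by simpa using hk), Nat.cast_zero, mul_zero]

theorem sum_Icc_three_neg_one_pow_mul_choose_pred {m n : ℕ} (hm : m < n) :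
    ∑ k ∈ Icc 3 n, (-1 : R) ^ k * (m.choose (k - 1) : R) = 1 - m - if m = 0 then 1 else 0 := by
  have hextend : ∑ k ∈ Icc 3 n, (-1 : R) ^ k * (m.choose (k - 1) : R) =
      ∑ k ∈ Ico 3 (n + 3), (-1 : R) ^ k * (m.choose (k - 1) : R) := by
    refine sum_subset (fun k => by simp only [mem_Icc, mem_Ico]; lia) fun k hk hk' => ?_
    rw [Nat.choose_eq_zero_of_lt (by simp only [mem_Icc, mem_Ico] at hk hk'; lia), Nat.cast_zero,
      mul_zero]
  have hshift : ∑ k ∈ Ico 3 (n + 3), (-1 : R) ^ k * (m.choose (k - 1) : R) =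
      -∑ k ∈ range n, (-1 : R) ^ (k + 2) * (m.choose (k + 2) : R) := by
    rw [sum_Ico_eq_sum_range, Nat.add_sub_cancel, ← sum_neg_distrib]
    refine sum_congr rfl fun k _ => ?_
    rw [show 3 + k = k + 2 + 1 by lia, Nat.add_sub_cancel, pow_succ, mul_neg_one, neg_mul]
  rw [hextend, hshift, ← sum_range_neg_one_pow_mul_choose (R := R) (show m < n + 2 by lia),
    sum_range_succ', sum_range_succ']
  simp only [zero_add, pow_zero, pow_one, Nat.choose_zero_right, Nat.choose_one_right,
    Nat.cast_one, one_mul, neg_mul]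
  abel

theorem apply_sub_eq_of_forall_sub_eq {n : ℕ} {a : ℕ → R} {α β : R}
    (hα : ∀ j, 1 ≤ j → j + 2 ≤ n → a j - a (j + 1) = α) (hβ : a (n - 1) - a n = β)
    {m : ℕ} (hm : m < n) :
    a (n - m) = a n + β * m + (β - α) * (1 - m - if m = 0 then 1 else 0) := by
  induction m with
  | zero => simp
  | succ m ih =>
    rcases Nat.eq_zero_or_pos m with rfl | hpos
    · simp [← hβ]
    · have hstep := hα (n - (m + 1)) (by lia) (by lia)
      rw [show n - (m + 1) + 1 = n - m by lia, ih (by lia), if_neg hpos.ne'] at hstep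
      rw [if_neg m.succ_ne_zero, sub_eq_iff_eq_add.mp hstep]
      push_cast
      noncomm_ring

end Coefficients

theorem stmt11_general {R M X : Type*} [Ring R] [AddCommGroup M] [Module R M]
    [SemilatticeSup X] [OrderBot X] (n : ℕ) (a : ℕ → R) (α β : R)
    (hα : ∀ j, 1 ≤ j → j + 2 ≤ n → a j - a (j + 1) = α) (hβ : a (n - 1) - a n = β)
    (x : Fin n → X) (σ : Equiv.Perm (Fin n)) (hσ : Antitone (x ∘ σ)) (f : X → M) :
    ∑ i : Fin n, a (i.1 + 1) • f (x (σ i)) =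
      a n • ∑ i, f (x i) +
      β • ∑ p : Fin n × Fin n with p.1 < p.2, f (x p.1 ⊔ x p.2) +
      (β - α) • ∑ k ∈ Icc 3 n, (-1 : R) ^ k • ∑ s ∈ powersetCard k univ, f (s.sup x) := by
  have hsum (k : ℕ) : ∑ s ∈ powersetCard (k + 1) univ, f (s.sup x) =
      ∑ i : Fin n, ((n - 1 - i).choose k : R) • f (x (σ i)) := by
    simp only [sum_powersetCard_succ_sup_of_antitone_comp hσ, Fin.card_Ioi, Nat.cast_smul_eq_nsmul]
  have halt : ∑ k ∈ Icc 3 n, (-1 : R) ^ k • ∑ s ∈ powersetCard k univ, f (s.sup x) =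
      ∑ i : Fin n, (∑ k ∈ Icc 3 n, (-1 : R) ^ k * ((n - 1 - i).choose (k - 1) : R)) •
        f (x (σ i)) := by
    simp only [sum_smul, mul_smul]
    rw [sum_comm]
    refine sum_congr rfl fun k hk => ?_
    rw [← smul_sum, ← hsum, Nat.sub_add_cancel (by have := (mem_Icc.mp hk).1; lia)]
  rw [sum_filter_lt_sup_eq_sum_powersetCard_two, hsum 1, halt,
    ← Equiv.sum_comp σ (fun i => f (x i)), smul_sum, smul_sum, smul_sum, ← sum_add_distrib,
    ← sum_add_distrib]
  refine sum_congr rfl fun i _ => ?_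
  have hi : n - 1 - i < n := by lia
  rw [show i.1 + 1 = n - (n - 1 - i) by lia, apply_sub_eq_of_forall_sub_eq hα hβ hi,
    sum_Icc_three_neg_one_pow_mul_choose_pred hi, Nat.choose_one_right]
  simp only [add_smul, mul_smul]

theorem maxAbsOn_eq_coe_sup_nnnorm {n : ℕ} (x : Fin n → ℝ) (s : Finset (Fin n)) :
    maxAbsOn x s = s.sup (fun i => ‖x i‖₊) :=
  fold_hom (op := max) (op' := max) (b := 0) (f := fun i => ‖x i‖₊) NNReal.coe_max

theorem antitone_nnnorm_comp_sort {n : ℕ} (x : Fin n → ℝ) :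
    Antitone ((fun i => ‖x i‖₊) ∘ Tuple.sort (fun j => -|x j|)) := fun _ _ hij =>
  NNReal.coe_le_coe.mp <| neg_le_neg_iff.mp (Tuple.monotone_sort (fun j => -|x j|) hij)

/-- Formula (10): if `a_1 − a_2 = … = a_{n−2} − a_{n−1} = α` and
`a_{n−1} − a_n = β`, then
`∑ aₖ (xₖ^*)^q = a_n ∑ |xᵢ|^q + β ∑_{i<j} max(|xᵢ|,|xⱼ|)^q
  + (β − α) ∑_{k=3}^n (−1)^k ∑_{i₁<…<i_k} max(|x_{i₁}|,…,|x_{i_k}|)^q`. -/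
theorem stmt11 (n : ℕ) (hn : 3 ≤ n) (q : ℝ) (hq : 0 < q)
    (a : ℕ → ℝ) (α β : ℝ)
    (hα : ∀ j, 1 ≤ j → j + 2 ≤ n → a j - a (j + 1) = α)
    (hβ : a (n - 1) - a n = β) (x : Fin n → ℝ) :
    ∑ i : Fin n, a (i.1 + 1) * dstar x i ^ q =
      a n * (∑ i : Fin n, |x i| ^ q) +
      β * (∑ p ∈ Finset.univ.filter (fun p : Fin n × Fin n => p.1 < p.2),
            (max |x p.1| |x p.2|) ^ q) +
      (β - α) * ∑ k ∈ Finset.Icc 3 n, (-1 : ℝ) ^ k *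
          ∑ s ∈ Finset.powersetCard k (Finset.univ : Finset (Fin n)),
            maxAbsOn x s ^ q := by
  simpa [dstar, maxAbsOn_eq_coe_sup_nnnorm] using stmt11_general n a α β hα hβ (fun i => ‖x i‖₊)
    (Tuple.sort fun j => -|x j|) (antitone_nnnorm_comp_sort x) (fun r => (r : ℝ) ^ q)
end

section
/- Let n ≥ 2, q > 0, and let a_1, …, a_n be real numbers forming an arithmetic progression, i.e., a_1 − a_2 = a_2 − a_3 = … = a_{n−1} − a_n. Then for every x = (x_1,…,x_n) ∈ ℝ^n, a_1 (x_1^*)^q + … + a_n (x_n^*)^q = a_n (|x_1|^q + … + |x_n|^q) + (a_{n−1} − a_n) Σ_{1 ≤ i < j ≤ n} max(|x_i|,|x_j|)^q. -/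
theorem antitone_comp_sort_neg {α : Type*} [AddCommGroup α] [LinearOrder α] [IsOrderedAddMonoid α]
    {n : ℕ} (y : Fin n → α) : Antitone (y ∘ Tuple.sort (fun j => -y j)) :=
  fun _ _ hij => neg_le_neg_iff.mp (Tuple.monotone_sort (fun j => -y j) hij)

section PairSums

variable {ι M : Type*} [LinearOrder ι] [Fintype ι] [AddCommMonoid M]

theorem sum_lt_eq_sum_sym2_not_isDiag (f : Sym2 ι → M) :
    ∑ p : ι × ι with p.1 < p.2, f s(p.1, p.2) = ∑ z : Sym2 ι with ¬ z.IsDiag, f z := by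
  have h_offDiag : (Finset.univ : Finset ι).offDiag.filter (fun p => p.1 < p.2) =
      Finset.univ.filter (fun p : ι × ι => p.1 < p.2) := by
    ext p
    simpa using ne_of_lt
  rw [← h_offDiag, ← Finset.sum_sym2_filter_not_isDiag, Finset.sym2_univ]

theorem sum_lt_sym2_comp_perm (f : Sym2 ι → M) (σ : Equiv.Perm ι) :
    ∑ p : ι × ι with p.1 < p.2, f s(σ p.1, σ p.2) =
      ∑ p : ι × ι with p.1 < p.2, f s(p.1, p.2) := by
  have h_bij : Function.Bijective (Sym2.map σ) :=
    Finite.injective_iff_bijective.mp (Sym2.map.injective σ.injective)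
  calc ∑ p : ι × ι with p.1 < p.2, f s(σ p.1, σ p.2)
      = ∑ z : Sym2 ι with ¬ z.IsDiag, f (z.map σ) :=
        sum_lt_eq_sum_sym2_not_isDiag (fun z => f (z.map σ))
    _ = ∑ z : Sym2 ι with ¬ z.IsDiag, f z :=
        Finset.sum_bijective (Sym2.map σ) h_bij (by simp [Sym2.isDiag_map σ.injective])
          fun _ _ => rfl
    _ = ∑ p : ι × ι with p.1 < p.2, f s(p.1, p.2) := (sum_lt_eq_sum_sym2_not_isDiag f).symm

variable {α : Type*} [SemilatticeSup α]

theorem sum_lt_sup_comp_perm (y : ι → α) (φ : α → M) (σ : Equiv.Perm ι) :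
    ∑ p : ι × ι with p.1 < p.2, φ (y (σ p.1) ⊔ y (σ p.2)) =
      ∑ p : ι × ι with p.1 < p.2, φ (y p.1 ⊔ y p.2) :=
  sum_lt_sym2_comp_perm (fun z => φ (z.map y).sup) σ

theorem sum_lt_sup_of_antitone [LocallyFiniteOrderTop ι] {y : ι → α} (hy : Antitone y)
    (φ : α → M) :
    ∑ p : ι × ι with p.1 < p.2, φ (y p.1 ⊔ y p.2) =
      ∑ i, (Finset.Ioi i).card • φ (y i) := by
  have h_sup : ∀ p ∈ Finset.univ.filter (fun p : ι × ι => p.1 < p.2),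
      φ (y p.1 ⊔ y p.2) = φ (y p.1) := fun p hp =>
    congrArg φ (sup_of_le_left (hy (Finset.mem_filter.mp hp).2.le))
  rw [Finset.sum_congr rfl h_sup, Finset.sum_filter, Fintype.sum_prod_type]
  simp only [← Finset.sum_filter, Finset.filter_lt_eq_Ioi, Finset.sum_const]

end PairSums

section ArithmeticProgression

variable {A : Type*} [AddCommGroup A] {n : ℕ} {a : ℕ → A}

theorem arithProg_sub_succ_eq_last_sub
    (hAP : ∀ i, 1 ≤ i → i + 2 ≤ n → a i - a (i + 1) = a (i + 1) - a (i + 2))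
    {i : ℕ} (hi : 1 ≤ i) (hin : i + 1 ≤ n) : a i - a (i + 1) = a (n - 1) - a n := by
  obtain ⟨m, rfl⟩ : ∃ m, n = m + 1 := ⟨n - 1, by omega⟩
  replace hin : i ≤ m := Nat.le_of_succ_le_succ hin
  induction hin using Nat.decreasingInduction with
  | self => rfl
  | of_succ k hk ih => exact (hAP k hi (by omega)).trans (ih (by omega))

theorem arithProg_eq_last_add_nsmul
    (hAP : ∀ i, 1 ≤ i → i + 2 ≤ n → a i - a (i + 1) = a (i + 1) - a (i + 2))
    {i : ℕ} (hi : 1 ≤ i) (hin : i ≤ n) : a i = a n + (n - i) • (a (n - 1) - a n) := by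
  induction hin using Nat.decreasingInduction with
  | self => simp
  | of_succ k hk ih =>
    calc a k = a (k + 1) + (a k - a (k + 1)) := by abel
      _ = a n + (n - (k + 1)) • (a (n - 1) - a n) + (a (n - 1) - a n) := by
        rw [← ih (by omega), arithProg_sub_succ_eq_last_sub hAP hi hk]
      _ = a n + (n - k) • (a (n - 1) - a n) := by
        rw [add_assoc, ← succ_nsmul, show n - (k + 1) + 1 = n - k by omega]

end ArithmeticProgression

theorem stmt12_general {R M α : Type*} [Ring R] [AddCommGroup M] [Module R M] [SemilatticeSup α]
    {n : ℕ} {a : ℕ → R}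
    (hAP : ∀ i, 1 ≤ i → i + 2 ≤ n → a i - a (i + 1) = a (i + 1) - a (i + 2))
    {y : Fin n → α} {σ : Equiv.Perm (Fin n)} (hσ : Antitone (y ∘ σ)) (φ : α → M) :
    ∑ i : Fin n, a (i.1 + 1) • φ (y (σ i)) =
      a n • ∑ i, φ (y i) +
      (a (n - 1) - a n) •
        ∑ p : Fin n × Fin n with p.1 < p.2, φ (y p.1 ⊔ y p.2) := by
  have h_coeff (i : Fin n) :
      a (i.1 + 1) = a n + (Finset.Ioi i).card • (a (n - 1) - a n) := by
    rw [arithProg_eq_last_add_nsmul hAP (Nat.le_add_left 1 i) i.2, Fin.card_Ioi,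
      Nat.sub_sub, Nat.add_comm 1]
  have h_pairs : ∑ p : Fin n × Fin n with p.1 < p.2, φ (y p.1 ⊔ y p.2) =
      ∑ i, (Finset.Ioi i).card • φ (y (σ i)) :=
    (sum_lt_sup_comp_perm y φ σ).symm.trans (sum_lt_sup_of_antitone hσ φ)
  rw [h_pairs, ← Equiv.sum_comp σ (fun i => φ (y i)), Finset.smul_sum, Finset.smul_sum,
    ← Finset.sum_add_distrib]
  refine Finset.sum_congr rfl fun i _ => ?_
  rw [h_coeff i, add_smul, smul_assoc, smul_comm]

/-- Formula (11): if `a_1, …, a_n` form an arithmetic progression, then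
`∑ aₖ (xₖ^*)^q = a_n ∑ |xᵢ|^q + (a_{n−1} − a_n) ∑_{i<j} max(|xᵢ|,|xⱼ|)^q`. -/
theorem stmt12 (n : ℕ) (hn : 2 ≤ n) (q : ℝ) (hq : 0 < q)
    (a : ℕ → ℝ)
    (hAP : ∀ i, 1 ≤ i → i + 2 ≤ n → a i - a (i + 1) = a (i + 1) - a (i + 2))
    (x : Fin n → ℝ) :
    ∑ i : Fin n, a (i.1 + 1) * dstar x i ^ q =
      a n * (∑ i : Fin n, |x i| ^ q) +
      (a (n - 1) - a n) *
        ∑ p ∈ Finset.univ.filter (fun p : Fin n × Fin n => p.1 < p.2),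
          (max |x p.1| |x p.2|) ^ q :=
  stmt12_general hAP (antitone_comp_sort_neg fun j => |x j|) (· ^ q)
end
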